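/- There exist positive numerical constants ρ_r′, ρ_s′, and c′ such that the following holds. Under the observation model with incoherence parameter ν, if r ≤ ρ_r′ · n2 · ν⁻¹ · (log n1)⁻² and m ≤ ρ_s′ · n1 · n2, then with probability at least 1 − c′·n1^{−10} over the random support Ω and the random signs, the following event occurs: for every δ ≥ 0 and every noise matrix Z0 with ‖Z0‖_F ≤ δ, every minimizer (L̂, Ŝ) of StablePCP_c(δ) with λ = 1/√n1 and data D = L0 + S0 + Z0 satisfies ‖(L̂, Ŝ) − (L0, S0)‖_F ≤ √(320·n1·n2 + 4) · δ. -/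

import Mathlib

open Matrix
open scoped BigOperators

/-- Frobenius norm of a real matrix. -/
noncomputable def frob {n1 n2 : ℕ} (A : Matrix (Fin n1) (Fin n2) ℝ) : ℝ :=
  Real.sqrt (∑ i, ∑ j, A i j ^ 2)

/-- Entrywise ℓ¹ norm. -/
noncomputable def l1norm {n1 n2 : ℕ} (A : Matrix (Fin n1) (Fin n2) ℝ) : ℝ :=
  ∑ i, ∑ j, |A i j|

/-- Trace inner product ⟨A,B⟩ = trace(AᵀB). -/
noncomputable def minner {n1 n2 : ℕ} (A B : Matrix (Fin n1) (Fin n2) ℝ) : ℝ :=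
  ∑ i, ∑ j, A i j * B i j

/-- Spectral norm (largest singular value), as the ℓ²→ℓ² operator norm. -/
noncomputable def spec {n1 n2 : ℕ} (A : Matrix (Fin n1) (Fin n2) ℝ) : ℝ :=
  sSup {c : ℝ | ∃ x : Fin n2 → ℝ, (∑ j, x j ^ 2) ≤ 1 ∧
    c = Real.sqrt (∑ i, (∑ j, A i j * x j) ^ 2)}

/-- Nuclear norm (sum of singular values), via duality with the spectral norm. -/
noncomputable def nuc {n1 n2 : ℕ} (A : Matrix (Fin n1) (Fin n2) ℝ) : ℝ :=
  sSup {c : ℝ | ∃ B : Matrix (Fin n1) (Fin n2) ℝ, spec B ≤ 1 ∧ c = minner A B}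

/-- P_Ω: the matrix agreeing with `M` on `Ω` and zero off `Ω`. -/
noncomputable def projS {n1 n2 : ℕ} (Ω : Finset (Fin n1 × Fin n2))
    (M : Matrix (Fin n1) (Fin n2) ℝ) : Matrix (Fin n1) (Fin n2) ℝ :=
  Matrix.of fun i j => if (i, j) ∈ Ω then M i j else 0

/-- Entrywise sign matrix. -/
noncomputable def signM {n1 n2 : ℕ} (A : Matrix (Fin n1) (Fin n2) ℝ) :
    Matrix (Fin n1) (Fin n2) ℝ :=
  Matrix.of fun i j => Real.sign (A i j)

/-- The tangent space T = {UQᵀ + RVᵀ}. -/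
def memT {n1 n2 r : ℕ} (U : Matrix (Fin n1) (Fin r) ℝ) (V : Matrix (Fin n2) (Fin r) ℝ)
    (M : Matrix (Fin n1) (Fin n2) ℝ) : Prop :=
  ∃ (Q : Matrix (Fin n2) (Fin r) ℝ) (R : Matrix (Fin n1) (Fin r) ℝ), M = U * Qᵀ + R * Vᵀ

/-- Membership in T⊥, the orthogonal complement of the tangent space. -/
def memTperp {n1 n2 r : ℕ} (U : Matrix (Fin n1) (Fin r) ℝ) (V : Matrix (Fin n2) (Fin r) ℝ)
    (W : Matrix (Fin n1) (Fin n2) ℝ) : Prop :=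
  ∀ M, memT U V M → minner W M = 0

/-- (L̂, Ŝ) is a global minimizer of the √PCP objective
`‖L‖_* + λ‖S‖₁ + μ‖L + S − D‖_F`. -/
def IsRootPCPMin {n1 n2 : ℕ} (D : Matrix (Fin n1) (Fin n2) ℝ) (lam mu : ℝ)
    (Lh Sh : Matrix (Fin n1) (Fin n2) ℝ) : Prop :=
  ∀ L S : Matrix (Fin n1) (Fin n2) ℝ,
    nuc Lh + lam * l1norm Sh + mu * frob (Lh + Sh - D) ≤
      nuc L + lam * l1norm S + mu * frob (L + S - D)

/-- (L̂, Ŝ) is a minimizer of StablePCP_c(δ):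
minimize `‖L‖_* + λ‖S‖₁` subject to `‖L + S − D‖_F ≤ δ`. -/
def IsStablePCPMin {n1 n2 : ℕ} (D : Matrix (Fin n1) (Fin n2) ℝ) (lam δ : ℝ)
    (Lh Sh : Matrix (Fin n1) (Fin n2) ℝ) : Prop :=
  frob (Lh + Sh - D) ≤ δ ∧
    ∀ L S : Matrix (Fin n1) (Fin n2) ℝ, frob (L + S - D) ≤ δ →
      nuc Lh + lam * l1norm Sh ≤ nuc L + lam * l1norm S

/-- Frobenius distance between pairs: ‖(L,S) − (L',S')‖_F. -/
noncomputable def pairDist {n1 n2 : ℕ} (L S L' S' : Matrix (Fin n1) (Fin n2) ℝ) : ℝ :=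
  Real.sqrt (frob (L - L') ^ 2 + frob (S - S') ^ 2)

/-- Sample space of the random sparsity model: a uniformly random support of
cardinality m together with iid uniform random signs. -/
abbrev SampleSpace (n1 n2 m : ℕ) : Type :=
  {Ω : Finset (Fin n1 × Fin n2) // Ω.card = m} × ((Fin n1 × Fin n2) → Bool)

/-- The sparse matrix S0 built from fixed magnitudes `a` and a random sample:
S0 vanishes off Ω and equals ±a on Ω according to the random signs. -/
noncomputable def sparseOf {n1 n2 m : ℕ} (a : Fin n1 × Fin n2 → ℝ) (ω : SampleSpace n1 n2 m) :
    Matrix (Fin n1) (Fin n2) ℝ :=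
  Matrix.of fun i j =>
    if (i, j) ∈ ω.1.1 then (if ω.2 (i, j) then a (i, j) else -a (i, j)) else 0

open Classical in
/-- Uniform probability of an event on a finite sample space. -/
noncomputable def unifProb {α : Type*} [Fintype α] (E : α → Prop) : ℝ :=
  ((Finset.univ.filter fun a => E a).card : ℝ) / (Fintype.card α : ℝ)

section FiniteProbability

variable {α β ι : Type*} [Fintype α] [Fintype β] [Fintype ι]

open Classical in
/-- Total weight of the event `E` under the weights `w`. -/
noncomputable def wP (w : α → ℝ) (E : α → Prop) : ℝ := ∑ a, if E a then w a else 0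

theorem wP_mono {w : α → ℝ} (hw : ∀ a, 0 ≤ w a) {E F : α → Prop} (h : ∀ a, E a → F a) :
    wP w E ≤ wP w F := by
  classical
  unfold wP
  refine Finset.sum_le_sum fun a _ => ?_
  by_cases hE : E a
  · simp [hE, h a hE]
  · simp only [hE, if_false]
    split_ifs
    exacts [hw a, le_rfl]

theorem wP_or {w : α → ℝ} (hw : ∀ a, 0 ≤ w a) (E F : α → Prop) :
    wP w (fun a => E a ∨ F a) ≤ wP w E + wP w F := by
  classical
  unfold wP
  rw [← Finset.sum_add_distrib]
  refine Finset.sum_le_sum fun a _ => ?_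
  have := hw a
  by_cases hE : E a <;> by_cases hF : F a <;> simp [hE, hF, this]

theorem wP_exists {κ : Type*} {w : α → ℝ} (hw : ∀ a, 0 ≤ w a) (s : Finset κ)
    (E : κ → α → Prop) :
    wP w (fun a => ∃ k ∈ s, E k a) ≤ ∑ k ∈ s, wP w (E k) := by
  classical
  unfold wP
  rw [Finset.sum_comm]
  refine Finset.sum_le_sum fun a _ => ?_
  split_ifs with h
  · obtain ⟨k, hk, hE⟩ := h
    have := Finset.single_le_sum (f := fun k => if E k a then w a else 0)
      (fun i _ => by split_ifs; exacts [hw a, le_rfl]) hk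
    simpa [hE] using this
  · refine Finset.sum_nonneg fun i _ => ?_
    split_ifs
    exacts [hw a, le_rfl]

/-- Markov's inequality for an event on which `f` is at least `1`. -/
theorem wP_le_sum {w : α → ℝ} (hw : ∀ a, 0 ≤ w a) {E : α → Prop} {f : α → ℝ}
    (hf : ∀ a, 0 ≤ f a) (h : ∀ a, E a → 1 ≤ f a) : wP w E ≤ ∑ a, w a * f a := by
  classical
  unfold wP
  refine Finset.sum_le_sum fun a _ => ?_
  split_ifs with hE
  · nlinarith [hw a, h a hE]
  · exact mul_nonneg (hw a) (hf a)

theorem wP_chernoff {w : α → ℝ} (hw : ∀ a, 0 ≤ w a) {f : α → ℝ} {t B : ℝ}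
    (h : ∑ a, w a * Real.exp (f a) ≤ B) :
    wP w (fun a => t < f a) ≤ Real.exp (-t) * B := by
  refine (wP_le_sum (f := fun a => Real.exp (-t) * Real.exp (f a)) hw
    (fun a => by positivity) ?_).trans ?_
  · intro a ha
    rw [← Real.exp_add]
    exact Real.one_le_exp (by linarith)
  · refine le_trans (le_of_eq ?_) (mul_le_mul_of_nonneg_left h (Real.exp_pos _).le)
    rw [Finset.mul_sum]
    exact Finset.sum_congr rfl fun a _ => by ring

theorem wP_prod (w : α → ℝ) (v : β → ℝ) (E : α × β → Prop) :
    wP (fun x : α × β => w x.1 * v x.2) E = ∑ a, w a * wP v (fun b => E (a, b)) := by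
  classical
  unfold wP
  rw [Fintype.sum_prod_type]
  refine Finset.sum_congr rfl fun a _ => ?_
  rw [Finset.mul_sum]
  exact Finset.sum_congr rfl fun b _ => by split_ifs <;> simp

/-- The weight of a Boolean under the Bernoulli law of parameter `p`. -/
noncomputable def bw (p : ℝ) (b : Bool) : ℝ := if b then p else 1 - p

/-- The weight of a Boolean vector under the product Bernoulli law. -/
noncomputable def bernW (p : ℝ) (ω : ι → Bool) : ℝ := ∏ e, bw p (ω e)

theorem bw_nonneg {p : ℝ} (h0 : 0 ≤ p) (h1 : p ≤ 1) (b : Bool) : 0 ≤ bw p b := by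
  unfold bw; split_ifs <;> linarith

theorem bernW_nonneg {p : ℝ} (h0 : 0 ≤ p) (h1 : p ≤ 1) (ω : ι → Bool) : 0 ≤ bernW p ω :=
  Finset.prod_nonneg fun e _ => bw_nonneg h0 h1 (ω e)

theorem sum_prod_bool [DecidableEq ι] (h : ι → Bool → ℝ) :
    ∑ ω : ι → Bool, ∏ e, h e (ω e) = ∏ e, (h e true + h e false) := by
  have := (Finset.prod_univ_sum (fun _ : ι => (Finset.univ : Finset Bool)) h).symm
  rw [Fintype.piFinset_univ] at this
  simpa [Fintype.sum_bool] using this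

theorem bernW_sum_prod [DecidableEq ι] (p : ℝ) (h : ι → Bool → ℝ) :
    ∑ ω : ι → Bool, bernW p ω * ∏ e, h e (ω e)
      = ∏ e, (p * h e true + (1 - p) * h e false) := by
  unfold bernW
  simp_rw [← Finset.prod_mul_distrib]
  rw [sum_prod_bool (fun e b => bw p b * h e b)]
  simp [bw]

theorem bernW_sum [DecidableEq ι] (p : ℝ) : ∑ ω : ι → Bool, bernW p ω = 1 := by
  have := bernW_sum_prod (ι := ι) p (fun _ _ => 1)
  simpa using this

theorem wP_bernW_le_one [DecidableEq ι] {p : ℝ} (h0 : 0 ≤ p) (h1 : p ≤ 1)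
    (E : (ι → Bool) → Prop) : wP (bernW p) E ≤ 1 := by
  refine (wP_mono (F := fun _ => True) (bernW_nonneg h0 h1) (by simp)).trans ?_
  simp [wP, bernW_sum]

/-- Exponential moments under the product Bernoulli law. -/
theorem bernW_sum_exp [DecidableEq ι] (p : ℝ) (h : ι → Bool → ℝ) :
    ∑ ω : ι → Bool, bernW p ω * Real.exp (∑ e, h e (ω e))
      = ∏ e, (p * Real.exp (h e true) + (1 - p) * Real.exp (h e false)) := by
  rw [← bernW_sum_prod p (fun e b => Real.exp (h e b))]
  simp [Real.exp_sum]

theorem bernW_sum_exp_le [DecidableEq ι] {p : ℝ} (h0 : 0 ≤ p) (h1 : p ≤ 1) (h : ι → Bool → ℝ)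
    (B : ι → ℝ)
    (hB : ∀ e, p * Real.exp (h e true) + (1 - p) * Real.exp (h e false) ≤ Real.exp (B e)) :
    ∑ ω : ι → Bool, bernW p ω * Real.exp (∑ e, h e (ω e)) ≤ Real.exp (∑ e, B e) := by
  rw [bernW_sum_exp, Real.exp_sum]
  refine Finset.prod_le_prod (fun e _ => ?_) fun e _ => hB e
  have : 0 ≤ 1 - p := by linarith
  positivity

/-- Removing from a Bernoulli set an independent Bernoulli set leaves a Bernoulli set. -/
theorem bernW_thinning [DecidableEq ι] (p q : ℝ) (g : (ι → Bool) → ℝ) :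
    ∑ b : ι → Bool, bernW q b * ∑ c : ι → Bool, bernW p c * g (fun e => c e && !b e)
      = ∑ ω : ι → Bool, bernW (p * (1 - q)) ω * g ω := by
  have key : ∀ ω : ι → Bool, bernW (p * (1 - q)) ω =
      ∑ b : ι → Bool, ∑ c : ι → Bool, ∏ e, (bw q (b e) * bw p (c e) *
        (if (c e && !b e) = ω e then 1 else 0)) := by
    intro ω
    have h1 : ∀ b : ι → Bool, ∑ c : ι → Bool, ∏ e, (bw q (b e) * bw p (c e) *
        (if (c e && !b e) = ω e then (1 : ℝ) else 0)) = ∏ e, ∑ c : Bool, (bw q (b e) * bw p c *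
        (if (c && !b e) = ω e then (1 : ℝ) else 0)) := by
      intro b
      rw [sum_prod_bool (fun e c => bw q (b e) * bw p c *
        (if (c && !b e) = ω e then (1 : ℝ) else 0))]
      simp
    simp_rw [h1]
    rw [sum_prod_bool (fun e b => ∑ c : Bool, (bw q b * bw p c *
        (if (c && !b) = ω e then (1 : ℝ) else 0)))]
    unfold bernW
    refine Finset.prod_congr rfl fun e _ => ?_
    cases ω e <;> simp [bw] <;> ring
  have hind : ∀ ω b c : ι → Bool, ∏ e, (bw q (b e) * bw p (c e) *
        (if (c e && !b e) = ω e then (1 : ℝ) else 0)) =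
      bernW q b * bernW p c * (if (fun e => c e && !b e) = ω then 1 else 0) := by
    intro ω b c
    rw [Finset.prod_mul_distrib, Finset.prod_mul_distrib]
    congr 1
    split_ifs with h
    · exact Finset.prod_eq_one fun e _ => if_pos (congrFun h e)
    · obtain ⟨e, he⟩ := Function.ne_iff.mp h
      exact Finset.prod_eq_zero (Finset.mem_univ e) (if_neg he)
  simp_rw [key, hind, Finset.sum_mul]
  rw [Finset.sum_comm]
  refine Finset.sum_congr rfl fun b _ => ?_
  rw [Finset.sum_comm, Finset.mul_sum]
  refine Finset.sum_congr rfl fun c _ => ?_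
  simp [mul_assoc]

theorem wP_thinning [DecidableEq ι] (p q : ℝ) (E : (ι → Bool) → Prop) :
    wP (bernW (p * (1 - q))) E
      = ∑ b : ι → Bool, bernW q b * wP (bernW p) (fun c => E fun e => c e && !b e) := by
  classical
  have := bernW_thinning p q (fun ω => if E ω then 1 else 0)
  simp only [wP]
  simp only [mul_ite, mul_one, mul_zero] at this ⊢
  rw [← this]

/-- A coordinate is independent of the remaining ones. -/
theorem bernW_sum_coord [DecidableEq ι] (p : ℝ) (e : ι) (f : (ι → Bool) → ℝ) :
    ∑ ω : ι → Bool, bernW p ω * (if ω e then f (Function.update ω e false) else 0)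
      = p * ∑ ω : ι → Bool, bernW p ω * f (Function.update ω e false) := by
  have split : ∀ F : (ι → Bool) → ℝ, ∑ ω : ι → Bool, F ω =
      ∑ ω : ι → Bool, (if ω e then 0 else F ω + F (Function.update ω e true)) := by
    intro F
    have h1 : ∑ ω : ι → Bool, F ω = ∑ ω : ι → Bool, (if ω e then 0 else F ω)
        + ∑ ω : ι → Bool, (if ω e then F ω else 0) := by
      rw [← Finset.sum_add_distrib]
      exact Finset.sum_congr rfl fun ω _ => by split_ifs <;> simp
    have h2 : ∑ ω : ι → Bool, (if ω e then F ω else 0) =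
        ∑ ω : ι → Bool, (if ω e then 0 else F (Function.update ω e true)) := by
      have inv : Function.Involutive fun ω : ι → Bool => Function.update ω e (!ω e) := by
        intro ω
        simp
      refine (Equiv.sum_comp inv.toPerm _).symm.trans (Finset.sum_congr rfl fun ω _ => ?_)
      cases h : ω e <;> simp [h]
    rw [h1, h2, ← Finset.sum_add_distrib]
    exact Finset.sum_congr rfl fun ω _ => by split_ifs <;> simp
  have hw : ∀ (ω : ι → Bool) (b : Bool), bernW p (Function.update ω e b)
      = bw p b * ∏ i ∈ Finset.univ.erase e, bw p (ω i) := by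
    intro ω b
    unfold bernW
    rw [← Finset.mul_prod_erase _ _ (Finset.mem_univ e)]
    congr 1
    · simp
    · exact Finset.prod_congr rfl fun i hi => by
        rw [Function.update_of_ne (Finset.ne_of_mem_erase hi)]
  rw [split, split (fun ω => bernW p ω * f (Function.update ω e false)), Finset.mul_sum]
  refine Finset.sum_congr rfl fun ω _ => ?_
  by_cases h : ω e = true
  · simp [h]
  · have hω : Function.update ω e false = ω := by
      rw [Function.update_eq_self_iff]; simpa using h
    have h3 := hw ω false
    rw [hω] at h3
    simp only [h, Function.update_self, Function.update_idem, hω, hw, h3, bw]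
    simp only [Bool.false_eq_true, if_true, if_false]
    ring

end FiniteProbability

section SpectralTail

/-- The bilinear form of `X` is at most `c` on pairs of vectors from the unit balls. -/
def SpecLe {n1 n2 : ℕ} (c : ℝ) (X : Fin n1 × Fin n2 → ℝ) : Prop :=
  ∀ (y : Fin n1 → ℝ) (x : Fin n2 → ℝ), ∑ i, y i ^ 2 ≤ 1 → ∑ j, x j ^ 2 ≤ 1 →
    ∑ i, ∑ j, y i * x j * X (i, j) ≤ c

/-- Integer vectors of squared Euclidean norm at most `4 n`. -/
noncomputable def intBall (n : ℕ) : Finset (Fin n → ℤ) :=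
  (Fintype.piFinset fun _ : Fin n => Finset.Icc (-(2 * n : ℤ)) (2 * n)).filter
    fun k => ∑ i, (k i : ℝ) ^ 2 ≤ 4 * n

theorem mem_intBall {n : ℕ} {k : Fin n → ℤ} (h : ∑ i, (k i : ℝ) ^ 2 ≤ 4 * n) :
    k ∈ intBall n := by
  unfold intBall
  rw [Finset.mem_filter, Fintype.mem_piFinset]
  refine ⟨fun i => ?_, h⟩
  have hn : 1 ≤ n := by have := i.2; omega
  have h1 : (k i : ℝ) ^ 2 ≤ 4 * n :=
    (Finset.single_le_sum (f := fun i => (k i : ℝ) ^ 2) (fun i _ => sq_nonneg _)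
      (Finset.mem_univ i)).trans h
  have h2 : (k i) ^ 2 ≤ 4 * n := by exact_mod_cast h1
  have hn' : (1 : ℤ) ≤ n := by exact_mod_cast hn
  rw [Finset.mem_Icc]
  constructor <;> nlinarith

theorem sum_exp_neg_sq_le (M : ℕ) :
    ∑ j ∈ Finset.Icc (-(M : ℤ)) M, Real.exp (-(j : ℝ) ^ 2) ≤ 3 - 2 * (1 / 2) ^ M := by
  induction M with
  | zero => norm_num
  | succ M ih =>
    have hI : Finset.Icc (-((M + 1 : ℕ) : ℤ)) ((M + 1 : ℕ) : ℤ) =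
        insert (-(M + 1 : ℤ)) (insert (M + 1 : ℤ) (Finset.Icc (-(M : ℤ)) M)) := by
      ext j
      simp only [Finset.mem_Icc, Finset.mem_insert]
      push_cast
      omega
    rw [hI, Finset.sum_insert, Finset.sum_insert]
    · push_cast
      have h2 : Real.exp (-((M : ℝ) + 1) ^ 2) ≤ (1 / 2) ^ (M + 1) := by
        have h3 : Real.exp (-((M : ℝ) + 1) ^ 2) ≤ Real.exp (-1) ^ (M + 1) := by
          rw [← Real.exp_nat_mul]
          apply Real.exp_le_exp.mpr
          push_cast
          nlinarith [(Nat.cast_nonneg M : (0 : ℝ) ≤ M)]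
        refine h3.trans (pow_le_pow_left₀ (Real.exp_pos _).le ?_ _)
        rw [Real.exp_neg, one_div]
        exact inv_anti₀ (by norm_num) (by linarith [Real.add_one_le_exp (1 : ℝ)])
      have h5 : Real.exp (-(-((M : ℝ) + 1)) ^ 2) = Real.exp (-((M : ℝ) + 1) ^ 2) := by
        congr 1; ring
      have h6 : (1 / 2 : ℝ) ^ (M + 1) = (1 / 2) ^ M * (1 / 2) := pow_succ _ _
      rw [h5]
      linarith
    · simp
    · simp only [Finset.mem_insert, Finset.mem_Icc]
      omega

theorem card_intBall_le (n : ℕ) : ((intBall n).card : ℝ) ≤ Real.exp (6 * n) := by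
  have h1 : ((intBall n).card : ℝ) ≤ ∑ k ∈ Fintype.piFinset
      (fun _ : Fin n => Finset.Icc (-(2 * n : ℤ)) (2 * n)),
      Real.exp (4 * n) * ∏ i, Real.exp (-(k i : ℝ) ^ 2) := by
    rw [Finset.card_eq_sum_ones]
    push_cast
    unfold intBall
    rw [Finset.sum_filter]
    refine Finset.sum_le_sum fun k _ => ?_
    split_ifs with h
    · rw [← Real.exp_sum, ← Real.exp_add]
      refine Real.one_le_exp ?_
      rw [Finset.sum_neg_distrib]
      linarith
    · positivity
  refine h1.trans ?_
  rw [← Finset.mul_sum, ← Finset.prod_univ_sum (fun _ : Fin n => Finset.Icc (-(2 * n : ℤ)) (2 * n))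
    (fun _ j => Real.exp (-(j : ℝ) ^ 2))]
  have h2 := sum_exp_neg_sq_le (2 * n)
  push_cast at h2
  have h3 : ∑ j ∈ Finset.Icc (-(2 * n : ℤ)) (2 * n), Real.exp (-(j : ℝ) ^ 2) ≤ Real.exp 2 := by
    have : (0 : ℝ) ≤ 2 * (1 / 2) ^ (2 * n) := by positivity
    linarith [Real.add_one_le_exp (2 : ℝ)]
  rw [Finset.prod_const, Finset.card_univ, Fintype.card_fin]
  calc Real.exp (4 * n) * _ ≤ Real.exp (4 * n) * Real.exp 2 ^ n := by
        gcongr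
    _ = Real.exp (6 * n) := by
        rw [← Real.exp_nat_mul, ← Real.exp_add]; congr 1; ring

/-- A linear functional on the unit ball is dominated by its value at a nearby scaled integer
vector. -/
theorem exists_rounding {n : ℕ} (x c : Fin n → ℝ) (hx : ∑ i, x i ^ 2 ≤ 1) :
    ∃ k ∈ intBall n, ∑ i, c i * x i ≤ ∑ i, c i * (k i / Real.sqrt n) := by
  refine ⟨fun i => if 0 ≤ c i then ⌊Real.sqrt n * x i⌋ + 1 else ⌊Real.sqrt n * x i⌋,
    mem_intBall ?_, ?_⟩
  · have hb : ∀ i, (((if 0 ≤ c i then ⌊Real.sqrt n * x i⌋ + 1 else ⌊Real.sqrt n * x i⌋ : ℤ) : ℝ))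
        ^ 2 ≤ 2 * (n * x i ^ 2) + 2 := by
      intro i
      have h1 := Int.floor_le (Real.sqrt n * x i)
      have h2 := Int.lt_floor_add_one (Real.sqrt n * x i)
      have h3 : n * x i ^ 2 = (Real.sqrt n * x i) ^ 2 := by
        rw [mul_pow, Real.sq_sqrt (Nat.cast_nonneg n)]
      rw [h3]
      generalize Real.sqrt n * x i = z at *
      have key : ∀ k : ℝ, |k - z| ≤ 1 → k ^ 2 ≤ 2 * z ^ 2 + 2 := by
        intro k hk
        have := abs_le.mp hk
        nlinarith [sq_nonneg (k - 2 * z)]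
      apply key
      rw [abs_le]
      split_ifs <;> push_cast <;> constructor <;> linarith
    refine (Finset.sum_le_sum fun i _ => hb i).trans ?_
    rw [Finset.sum_add_distrib, ← Finset.mul_sum, ← Finset.mul_sum]
    simp only [Finset.sum_const, Finset.card_univ, Fintype.card_fin, nsmul_eq_mul]
    nlinarith [(Nat.cast_nonneg n : (0 : ℝ) ≤ n)]
  · refine Finset.sum_le_sum fun i _ => ?_
    have hn : (0 : ℝ) < Real.sqrt n := by
      have : 0 < n := by have := i.2; omega
      positivity
    dsimp only
    split_ifs with h
    · refine mul_le_mul_of_nonneg_left ?_ h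
      rw [le_div_iff₀ hn]
      push_cast
      linarith [Int.lt_floor_add_one (Real.sqrt n * x i)]
    · refine mul_le_mul_of_nonpos_left ?_ (not_le.mp h).le
      rw [div_le_iff₀ hn]
      linarith [Int.floor_le (Real.sqrt n * x i)]

theorem exists_rounding_pair {n1 n2 : ℕ} {X : Fin n1 × Fin n2 → ℝ} {c : ℝ}
    (h : ¬ SpecLe c X) :
    ∃ kl ∈ intBall n1 ×ˢ intBall n2,
      c < ∑ e : Fin n1 × Fin n2, (kl.1 e.1 / Real.sqrt n1 * (kl.2 e.2 / Real.sqrt n2)) * X e := by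
  unfold SpecLe at h
  push Not at h
  obtain ⟨y, x, hy, hx, hc⟩ := h
  obtain ⟨k, hk, h1⟩ := exists_rounding y (fun i => ∑ j, x j * X (i, j)) hy
  obtain ⟨l, hl, h2⟩ := exists_rounding x (fun j => ∑ i, (k i / Real.sqrt n1) * X (i, j)) hx
  refine ⟨(k, l), Finset.mem_product.mpr ⟨hk, hl⟩, hc.trans_le ?_⟩
  calc ∑ i, ∑ j, y i * x j * X (i, j) = ∑ i, (∑ j, x j * X (i, j)) * y i :=
        Finset.sum_congr rfl fun i _ => by
          rw [Finset.sum_mul]; exact Finset.sum_congr rfl fun j _ => by ring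
    _ ≤ _ := h1
    _ = ∑ j, (∑ i, (k i / Real.sqrt n1) * X (i, j)) * x j := by
        simp_rw [Finset.sum_mul]
        rw [Finset.sum_comm]
        exact Finset.sum_congr rfl fun j _ => Finset.sum_congr rfl fun i _ => by ring
    _ ≤ _ := h2
    _ = _ := by
        rw [Fintype.sum_prod_type_right]
        refine Finset.sum_congr rfl fun j _ => ?_
        rw [Finset.sum_mul]
        exact Finset.sum_congr rfl fun i _ => by ring

/-- A random matrix with subgaussian linear functionals has small spectral norm. -/
theorem wP_not_specLe_le {α : Type*} [Fintype α] {n1 n2 : ℕ} (hn2 : 0 < n2) (hn : n2 ≤ n1)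
    {w : α → ℝ} (hw : ∀ a, 0 ≤ w a) (X : α → Fin n1 × Fin n2 → ℝ) {κ τ : ℝ} (hκ : 0 < κ)
    (hτ : 0 < τ) (hκτ : 832 * κ ≤ τ ^ 2)
    (h : ∀ M : Fin n1 × Fin n2 → ℝ,
      ∑ a, w a * Real.exp (∑ e, M e * X a e) ≤ Real.exp (κ * ∑ e, M e ^ 2)) :
    wP w (fun a => ¬ SpecLe (τ * Real.sqrt n1) (X a)) ≤ Real.exp (-n1) := by
  have hn1 : 0 < n1 := hn2.trans_le hn
  have hn1' : (0 : ℝ) < n1 := by exact_mod_cast hn1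
  have hn2' : (0 : ℝ) < n2 := by exact_mod_cast hn2
  set t := τ * Real.sqrt n1 with ht
  have ht2 : t ^ 2 = τ ^ 2 * n1 := by rw [ht, mul_pow, Real.sq_sqrt hn1'.le]
  have htpos : 0 < t := by positivity
  refine (wP_mono hw fun a => exists_rounding_pair).trans ?_
  refine (wP_exists hw _ _).trans ?_
  have hone : ∀ kl ∈ intBall n1 ×ˢ intBall n2,
      wP w (fun a => t < ∑ e : Fin n1 × Fin n2,
        (kl.1 e.1 / Real.sqrt n1 * (kl.2 e.2 / Real.sqrt n2)) * X a e) ≤ Real.exp (-(13 * n1)) := by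
    intro kl hkl
    rw [Finset.mem_product] at hkl
    have hk := (Finset.mem_filter.mp hkl.1).2
    have hl := (Finset.mem_filter.mp hkl.2).2
    set s := t / (32 * κ) with hs
    have hspos : 0 < s := by positivity
    have hM : ∑ e : Fin n1 × Fin n2,
        (s * (kl.1 e.1 / Real.sqrt n1 * (kl.2 e.2 / Real.sqrt n2))) ^ 2 ≤ 16 * s ^ 2 := by
      have : ∑ e : Fin n1 × Fin n2,
          (s * (kl.1 e.1 / Real.sqrt n1 * (kl.2 e.2 / Real.sqrt n2))) ^ 2 =
          s ^ 2 * (((∑ i, (kl.1 i : ℝ) ^ 2) / n1) * ((∑ j, (kl.2 j : ℝ) ^ 2) / n2)) := by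
        rw [Finset.sum_div, Finset.sum_div, Finset.sum_mul_sum, Finset.mul_sum,
          Fintype.sum_prod_type]
        refine Finset.sum_congr rfl fun i _ => ?_
        rw [Finset.mul_sum]
        refine Finset.sum_congr rfl fun j _ => ?_
        rw [mul_pow, mul_pow, div_pow (kl.1 _ : ℝ), div_pow (kl.2 _ : ℝ), Real.sq_sqrt hn1'.le,
          Real.sq_sqrt hn2'.le]
      rw [this]
      have h1 : (∑ i, (kl.1 i : ℝ) ^ 2) / n1 ≤ 4 := by rw [div_le_iff₀ hn1']; exact hk
      have h2 : (∑ i, (kl.2 i : ℝ) ^ 2) / n2 ≤ 4 := by rw [div_le_iff₀ hn2']; exact hl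
      have h3 : ((∑ i, (kl.1 i : ℝ) ^ 2) / n1) * ((∑ j, (kl.2 j : ℝ) ^ 2) / n2) ≤ 4 * 4 :=
        mul_le_mul h1 h2 (div_nonneg (Finset.sum_nonneg fun _ _ => sq_nonneg _) hn2'.le)
          (by norm_num)
      nlinarith [sq_nonneg s]
    have hch := wP_chernoff (t := s * t) hw (h fun e : Fin n1 × Fin n2 =>
        s * (kl.1 e.1 / Real.sqrt n1 * (kl.2 e.2 / Real.sqrt n2)))
    refine (wP_mono hw ?_).trans (hch.trans ?_)
    · intro a ha
      have := mul_lt_mul_of_pos_left ha hspos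
      rw [Finset.mul_sum] at this
      refine this.trans_eq (Finset.sum_congr rfl fun e _ => by ring)
    · rw [← Real.exp_add]
      apply Real.exp_le_exp.mpr
      have h1 : κ * ∑ e : Fin n1 × Fin n2,
          (s * (kl.1 e.1 / Real.sqrt n1 * (kl.2 e.2 / Real.sqrt n2))) ^ 2 ≤ κ * (16 * s ^ 2) :=
        mul_le_mul_of_nonneg_left hM hκ.le
      have h2 : s * t - κ * (16 * s ^ 2) = t ^ 2 / (64 * κ) := by
        rw [hs]; field_simp; ring
      have h3 : 13 * (n1 : ℝ) ≤ t ^ 2 / (64 * κ) := by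
        rw [ht2, le_div_iff₀ (by positivity)]
        nlinarith
      linarith
  refine (Finset.sum_le_sum hone).trans ?_
  rw [Finset.sum_const, Finset.card_product, nsmul_eq_mul]
  push_cast
  calc ((intBall n1).card : ℝ) * (intBall n2).card * Real.exp (-(13 * n1))
      ≤ Real.exp (6 * n1) * Real.exp (6 * n2) * Real.exp (-(13 * n1)) := by
        gcongr
        exacts [card_intBall_le n1, card_intBall_le n2]
    _ = Real.exp (6 * n1 + 6 * n2 - 13 * n1) := by
        rw [← Real.exp_add, ← Real.exp_add]; congr 1
    _ ≤ Real.exp (-n1) := by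
        apply Real.exp_le_exp.mpr
        have : (n2 : ℝ) ≤ n1 := by exact_mod_cast hn
        linarith

end SpectralTail

section ScalarMoments

theorem exp_le_add_exp_sq (x : ℝ) : Real.exp x ≤ x + Real.exp (x ^ 2) := by
  have h2 := Real.add_one_le_exp (x ^ 2)
  rcases le_total |x| 1 with h | h
  · have := abs_le.mp (Real.abs_exp_sub_one_sub_id_le h)
    linarith
  · rcases le_total 0 x with hx | hx
    · rw [abs_of_nonneg hx] at h
      have : Real.exp x ≤ Real.exp (x ^ 2) := Real.exp_le_exp.mpr (by nlinarith)
      linarith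
    · rw [abs_of_nonpos hx] at h
      have : Real.exp x ≤ 1 := Real.exp_le_one_iff.mpr hx
      nlinarith

/-- Hoeffding-type bound for a centered two-point variable. -/
theorem two_point_exp_le {p u v B : ℝ} (h0 : 0 ≤ p) (h1 : p ≤ 1)
    (hc : p * u + (1 - p) * v = 0) (hu : u ^ 2 ≤ B) (hv : v ^ 2 ≤ B) :
    p * Real.exp u + (1 - p) * Real.exp v ≤ Real.exp B := by
  have hu' := (exp_le_add_exp_sq u).trans (add_le_add_right (Real.exp_le_exp.mpr hu) u)
  have hv' := (exp_le_add_exp_sq v).trans (add_le_add_right (Real.exp_le_exp.mpr hv) v)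
  have := mul_le_mul_of_nonneg_left hu' h0
  have := mul_le_mul_of_nonneg_left hv' (by linarith : 0 ≤ 1 - p)
  linarith

/-- Bernstein-type bound for a centered two-point variable. -/
theorem two_point_exp_le_of_abs_le_one {p u v V : ℝ} (h0 : 0 ≤ p) (h1 : p ≤ 1)
    (hc : p * u + (1 - p) * v = 0) (hu : |u| ≤ 1) (hv : |v| ≤ 1)
    (hV : p * u ^ 2 + (1 - p) * v ^ 2 ≤ V) :
    p * Real.exp u + (1 - p) * Real.exp v ≤ Real.exp V := by
  have hu' := (abs_le.mp (Real.abs_exp_sub_one_sub_id_le hu)).2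
  have hv' := (abs_le.mp (Real.abs_exp_sub_one_sub_id_le hv)).2
  have := mul_le_mul_of_nonneg_left hu' h0
  have := mul_le_mul_of_nonneg_left hv' (by linarith : 0 ≤ 1 - p)
  linarith [Real.add_one_le_exp V]

theorem rademacher_exp_le (x : ℝ) :
    1 / 2 * Real.exp x + (1 - 1 / 2) * Real.exp (-x) ≤ Real.exp (x ^ 2 / 2) := by
  have := Real.cosh_le_exp_half_sq x
  rw [Real.cosh_eq] at this
  linarith

/-- A rarely nonzero random sign is subgaussian with a small parameter. -/
theorem sparse_sign_exp_le {κ ρ : ℝ} (hκ : 0 < κ) (h0 : 0 ≤ ρ)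
    (hρ : ρ ≤ 2 * κ * Real.exp (-(1 / (2 * κ ^ 2)))) (h1 : ρ ≤ 1) (t : ℝ) :
    ρ * (1 / 2 * Real.exp t + (1 - 1 / 2) * Real.exp (-t)) + (1 - ρ) ≤ Real.exp (κ * t ^ 2) := by
  have hc : 1 / 2 * Real.exp t + (1 - 1 / 2) * Real.exp (-t) = Real.cosh t := by
    rw [Real.cosh_eq]; ring
  rw [hc]
  have hc1 := Real.one_le_cosh t
  rcases le_total |t| (1 / κ) with h | h
  · have ht : t ^ 2 / 2 ≤ 1 / (2 * κ ^ 2) := by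
      have := pow_le_pow_left₀ (abs_nonneg t) h 2
      rw [sq_abs, div_pow, one_pow] at this
      calc t ^ 2 / 2 ≤ 1 / κ ^ 2 / 2 := by linarith
        _ = _ := by field_simp
    have h2 := Real.cosh_le_exp_half_sq t
    set y := t ^ 2 / 2 with hy
    have hy0 : 0 ≤ y := by positivity
    have h3 : Real.exp y - 1 ≤ y * Real.exp y := by
      have := Real.add_one_le_exp (-y)
      have h4 : Real.exp (-y) * Real.exp y = 1 := by rw [← Real.exp_add]; simp
      nlinarith [Real.exp_pos y]
    have h5 : ρ * Real.exp y ≤ 2 * κ := by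
      calc ρ * Real.exp y ≤ 2 * κ * Real.exp (-(1 / (2 * κ ^ 2))) * Real.exp (1 / (2 * κ ^ 2)) := by
            gcongr
        _ = 2 * κ := by rw [mul_assoc, ← Real.exp_add]; simp
    have h6 : ρ * (Real.cosh t - 1) ≤ κ * t ^ 2 := by
      calc ρ * (Real.cosh t - 1) ≤ ρ * (y * Real.exp y) := by
            apply mul_le_mul_of_nonneg_left _ h0; linarith
        _ = y * (ρ * Real.exp y) := by ring
        _ ≤ y * (2 * κ) := by gcongr
        _ = κ * t ^ 2 := by rw [hy]; ring
    linarith [Real.add_one_le_exp (κ * t ^ 2)]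
  · have h2 : |t| ≤ κ * t ^ 2 := by
      rw [div_le_iff₀ hκ] at h
      nlinarith [abs_nonneg t, sq_abs t]
    have h3 : Real.cosh t ≤ Real.exp |t| := by
      rw [← Real.cosh_abs, Real.cosh_eq]
      have : Real.exp (-|t|) ≤ Real.exp |t| :=
        Real.exp_le_exp.mpr (by linarith [abs_nonneg t])
      linarith
    have h4 := Real.exp_le_exp.mpr h2
    nlinarith

/-- Two-sided tail bound for a subgaussian variable. -/
theorem wP_abs_tail {α : Type*} [Fintype α] {w : α → ℝ} (hw : ∀ a, 0 ≤ w a) {f : α → ℝ}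
    {s V t : ℝ} (hs : 0 < s)
    (h1 : ∑ a, w a * Real.exp (s * f a) ≤ Real.exp V)
    (h2 : ∑ a, w a * Real.exp (-s * f a) ≤ Real.exp V) :
    wP w (fun a => t < |f a|) ≤ 2 * Real.exp (V - s * t) := by
  have c1 := wP_chernoff (t := s * t) hw h1
  have c2 := wP_chernoff (t := s * t) hw h2
  rw [← Real.exp_add] at c1 c2
  refine (wP_mono hw (F := fun a => s * t < s * f a ∨ s * t < -s * f a) ?_).trans
    ((wP_or hw _ _).trans ?_)
  · intro a ha
    rcases lt_abs.mp ha with h | h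
    · left; nlinarith
    · right; nlinarith
  · have : -(s * t) + V = V - s * t := by ring
    rw [this] at c1 c2
    linarith

end ScalarMoments

section CompressionNorm

variable {ι : Type*} [Fintype ι] [DecidableEq ι]

/-- Spectral representation of the moments of a positive semidefinite matrix. -/
theorem Matrix.PosSemidef.exists_moments {B : Matrix ι ι ℝ} (hB : B.PosSemidef) :
    ∃ lam : ι → ℝ, (∀ l, 0 ≤ lam l) ∧ (∀ a : ℕ, (B ^ a).trace = ∑ l, lam l ^ a) ∧
      ∀ u : ι → ℝ, ∃ w : ι → ℝ, (∀ l, 0 ≤ w l) ∧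
        ∀ a : ℕ, u ⬝ᵥ (B ^ a *ᵥ u) = ∑ l, w l * lam l ^ a := by
  obtain ⟨Q, d, hd, hQQ, hsp⟩ : ∃ (Q : Matrix ι ι ℝ) (d : ι → ℝ), (∀ l, 0 ≤ d l) ∧
      Qᵀ * Q = 1 ∧ B = Q * diagonal d * Qᵀ := by
    refine ⟨hB.1.eigenvectorUnitary, hB.1.eigenvalues, hB.eigenvalues_nonneg, ?_, ?_⟩
    · have := Unitary.coe_star_mul_self hB.1.eigenvectorUnitary
      simpa [star_eq_conjTranspose, conjTranspose_eq_transpose_of_trivial] using this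
    · have := hB.1.spectral_theorem
      rw [Unitary.conjStarAlgAut_apply] at this
      simpa [star_eq_conjTranspose, conjTranspose_eq_transpose_of_trivial,
        Function.comp_def] using this
  have hpow : ∀ a : ℕ, B ^ a = Q * diagonal (fun l => d l ^ a) * Qᵀ := by
    intro a
    induction a with
    | zero =>
      simp only [pow_zero]
      have : Q * Qᵀ = 1 := mul_eq_one_comm.mp hQQ
      rw [show (diagonal fun _ : ι => (1 : ℝ)) = 1 from diagonal_one, Matrix.mul_one, this]
    | succ a ih =>
      rw [pow_succ, ih]
      nth_rw 1 [hsp]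
      calc _ = Q * diagonal (fun l => d l ^ a) * (Qᵀ * Q) * diagonal d * Qᵀ := by
            simp only [Matrix.mul_assoc]
        _ = _ := by
          rw [hQQ, Matrix.mul_one, Matrix.mul_assoc Q, diagonal_mul_diagonal]
          simp only [pow_succ]
  refine ⟨d, hd, fun a => ?_, fun u => ?_⟩
  · rw [hpow, trace_mul_comm, ← Matrix.mul_assoc, hQQ, Matrix.one_mul, trace_diagonal]
  · refine ⟨fun l => (Qᵀ *ᵥ u) l ^ 2, fun l => sq_nonneg _, fun a => ?_⟩
    rw [hpow, ← mulVec_mulVec, ← mulVec_mulVec, dotProduct_mulVec, ← mulVec_transpose]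
    simp only [dotProduct, mulVec_diagonal]
    exact Finset.sum_congr rfl fun l _ => by ring

/-- Weighted Chebyshev sum inequality. -/
theorem weighted_chebyshev {ι : Type*} [Fintype ι] {w f g : ι → ℝ} (hw : ∀ l, 0 ≤ w l)
    (h : ∀ l m, 0 ≤ (f l - f m) * (g l - g m)) :
    (∑ l, w l * f l) * (∑ l, w l * g l) ≤ (∑ l, w l) * ∑ l, w l * (f l * g l) := by
  have h1 : 0 ≤ ∑ l, ∑ m, w l * w m * ((f l - f m) * (g l - g m)) :=
    Finset.sum_nonneg fun l _ => Finset.sum_nonneg fun m _ =>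
      mul_nonneg (mul_nonneg (hw l) (hw m)) (h l m)
  have h2 : ∑ l, ∑ m, w l * w m * ((f l - f m) * (g l - g m)) =
      2 * ((∑ l, w l) * ∑ l, w l * (f l * g l)) -
        2 * ((∑ l, w l * f l) * (∑ l, w l * g l)) := by
    have e1 : (∑ l, w l) * ∑ l, w l * (f l * g l) = ∑ l, ∑ m, w l * (w m * (f m * g m)) :=
      Finset.sum_mul_sum ..
    have e2 : (∑ l, w l) * ∑ l, w l * (f l * g l) = ∑ l, ∑ m, (w l * (f l * g l)) * w m := by
      rw [mul_comm]; exact Finset.sum_mul_sum ..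
    have e3 : (∑ l, w l * f l) * (∑ l, w l * g l) = ∑ l, ∑ m, (w l * f l) * (w m * g m) :=
      Finset.sum_mul_sum ..
    have e4 : (∑ l, w l * f l) * (∑ l, w l * g l) = ∑ l, ∑ m, (w l * g l) * (w m * f m) := by
      rw [mul_comm]; exact Finset.sum_mul_sum ..
    rw [two_mul, two_mul]
    nth_rw 1 [e1]
    rw [e2]
    nth_rw 1 [e3]
    rw [e4]
    simp only [← Finset.sum_add_distrib, ← Finset.sum_sub_distrib]
    exact Finset.sum_congr rfl fun l _ => Finset.sum_congr rfl fun m _ => by ring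
  linarith

theorem rank_one_pow_mulVec (B : Matrix ι ι ℝ) (u : ι → ℝ) (j : ℕ) :
    (B + vecMulVec u u) ^ j *ᵥ u = B ^ j *ᵥ u +
      ∑ i ∈ Finset.range j,
        (u ⬝ᵥ ((B + vecMulVec u u) ^ i *ᵥ u)) • (B ^ (j - 1 - i) *ᵥ u) := by
  induction j with
  | zero => simp
  | succ j ih =>
    rw [pow_succ', ← mulVec_mulVec, Matrix.add_mulVec]
    have h2 : vecMulVec u u *ᵥ ((B + vecMulVec u u) ^ j *ᵥ u) =
        (u ⬝ᵥ ((B + vecMulVec u u) ^ j *ᵥ u)) • u := by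
      ext e
      simp only [mulVec, vecMulVec_apply, dotProduct, Pi.smul_apply, smul_eq_mul, Finset.sum_mul]
      exact Finset.sum_congr rfl fun f _ => by ring
    rw [h2, Finset.sum_range_succ]
    nth_rw 1 [ih]
    rw [Matrix.mulVec_add, mulVec_mulVec, ← pow_succ', Matrix.mulVec_sum]
    rw [show j + 1 - 1 - j = 0 by omega, pow_zero, Matrix.one_mulVec, add_assoc]
    congr 2
    refine Finset.sum_congr rfl fun i hi => ?_
    rw [Matrix.mulVec_smul, mulVec_mulVec, ← pow_succ']
    have : i < j := Finset.mem_range.mp hi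
    rw [show j + 1 - 1 - i = j - 1 - i + 1 by omega]

/-- Moments of a rank-one perturbation, seen from the perturbing vector. -/
theorem rank_one_moment_bounds {B : Matrix ι ι ℝ} (hB : B.PosSemidef) {u : ι → ℝ} {μ : ℝ}
    (hu : u ⬝ᵥ u ≤ μ) {K j : ℕ} (hK : 0 < K) (hj : j ≤ K) :
    u ⬝ᵥ (B ^ j *ᵥ u) ≤ u ⬝ᵥ ((B + vecMulVec u u) ^ j *ᵥ u) ∧
    u ⬝ᵥ ((B + vecMulVec u u) ^ j *ᵥ u) ≤
      3 * (u ⬝ᵥ (B ^ j *ᵥ u)) + ((K + 1) * μ) ^ j * (u ⬝ᵥ u) := by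
  obtain ⟨lam, hlam, -, hw⟩ := hB.exists_moments
  obtain ⟨w, hw0, hb⟩ := hw u
  have huu : u ⬝ᵥ u = ∑ l, w l := by simpa using hb 0
  have hμ : 0 ≤ μ := le_trans (by rw [huu]; exact Finset.sum_nonneg fun l _ => hw0 l) hu
  have hb0 : ∀ a, 0 ≤ u ⬝ᵥ (B ^ a *ᵥ u) := fun a => by
    rw [hb]; exact Finset.sum_nonneg fun l _ => mul_nonneg (hw0 l) (pow_nonneg (hlam l) _)
  have hrec : ∀ j, u ⬝ᵥ ((B + vecMulVec u u) ^ j *ᵥ u) = u ⬝ᵥ (B ^ j *ᵥ u) +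
      ∑ i ∈ Finset.range j, (u ⬝ᵥ ((B + vecMulVec u u) ^ i *ᵥ u)) *
        (u ⬝ᵥ (B ^ (j - 1 - i) *ᵥ u)) := by
    intro j
    nth_rw 1 [rank_one_pow_mulVec]
    rw [dotProduct_add, dotProduct_sum]
    simp
  have hpos : ∀ j, 0 ≤ u ⬝ᵥ ((B + vecMulVec u u) ^ j *ᵥ u) := by
    intro j
    induction j using Nat.strong_induction_on with
    | _ j ih =>
      rw [hrec]
      exact add_nonneg (hb0 j) (Finset.sum_nonneg fun i hi =>
        mul_nonneg (ih i (Finset.mem_range.mp hi)) (hb0 _))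
  have hup : ∀ j, u ⬝ᵥ ((B + vecMulVec u u) ^ j *ᵥ u) ≤ ∑ l, w l * (lam l + μ) ^ j := by
    intro j
    induction j using Nat.strong_induction_on with
    | _ j ih =>
      rw [hrec]
      have hterm : ∀ i ∈ Finset.range j, (u ⬝ᵥ ((B + vecMulVec u u) ^ i *ᵥ u)) *
          (u ⬝ᵥ (B ^ (j - 1 - i) *ᵥ u)) ≤
          ∑ l, w l * (μ * ((lam l + μ) ^ i * lam l ^ (j - 1 - i))) := by
        intro i hi
        have hnn : 0 ≤ ∑ l, w l * ((lam l + μ) ^ i * lam l ^ (j - 1 - i)) :=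
          Finset.sum_nonneg fun l _ => mul_nonneg (hw0 l)
            (mul_nonneg (pow_nonneg (add_nonneg (hlam l) hμ) _) (pow_nonneg (hlam l) _))
        calc _ ≤ (∑ l, w l * (lam l + μ) ^ i) * (u ⬝ᵥ (B ^ (j - 1 - i) *ᵥ u)) :=
              mul_le_mul_of_nonneg_right (ih i (Finset.mem_range.mp hi)) (hb0 _)
          _ = (∑ l, w l * (lam l + μ) ^ i) * ∑ l, w l * lam l ^ (j - 1 - i) := by rw [hb]
          _ ≤ (∑ l, w l) * ∑ l, w l * ((lam l + μ) ^ i * lam l ^ (j - 1 - i)) := by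
              refine weighted_chebyshev hw0 fun l m => ?_
              rcases le_total (lam l) (lam m) with h | h
              · refine mul_nonneg_of_nonpos_of_nonpos (sub_nonpos.mpr ?_) (sub_nonpos.mpr ?_)
                · exact pow_le_pow_left₀ (add_nonneg (hlam l) hμ) (by linarith) _
                · exact pow_le_pow_left₀ (hlam l) h _
              · refine mul_nonneg (sub_nonneg.mpr ?_) (sub_nonneg.mpr ?_)
                · exact pow_le_pow_left₀ (add_nonneg (hlam m) hμ) (by linarith) _
                · exact pow_le_pow_left₀ (hlam m) h _
          _ ≤ μ * ∑ l, w l * ((lam l + μ) ^ i * lam l ^ (j - 1 - i)) :=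
              mul_le_mul_of_nonneg_right (huu ▸ hu) hnn
          _ = _ := by
              rw [Finset.mul_sum]; exact Finset.sum_congr rfl fun l _ => by ring
      refine (add_le_add_right (Finset.sum_le_sum hterm) _).trans_eq ?_
      rw [hb, Finset.sum_comm, ← Finset.sum_add_distrib]
      refine Finset.sum_congr rfl fun l _ => ?_
      have hg := geom_sum₂_mul (lam l + μ) (lam l) j
      rw [← Finset.mul_sum, ← Finset.mul_sum]
      have : lam l + μ - lam l = μ := by ring
      rw [this] at hg
      rw [mul_comm μ, hg]
      ring
  constructor
  · rw [hrec j]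
    exact le_add_of_nonneg_right (Finset.sum_nonneg fun i _ => mul_nonneg (hpos i) (hb0 _))
  · refine (hup j).trans ?_
    rw [hb, huu, Finset.mul_sum, Finset.mul_sum, ← Finset.sum_add_distrib]
    refine Finset.sum_le_sum fun l _ => ?_
    have hKr : (0 : ℝ) < K := by exact_mod_cast hK
    have hmain : (lam l + μ) ^ j ≤ 3 * lam l ^ j + ((K + 1) * μ) ^ j := by
      have hp1 : 0 ≤ lam l ^ j := pow_nonneg (hlam l) _
      have hp2 : 0 ≤ ((K + 1) * μ) ^ j := by positivity
      rcases le_total (K * μ) (lam l) with h | h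
      · have h1 : lam l + μ ≤ (1 + 1 / K) * lam l := by
          have : μ ≤ 1 / K * lam l := by
            rw [one_div, inv_mul_eq_div, le_div_iff₀ hKr]; linarith
          linarith
        have h2 : (1 + 1 / (K : ℝ)) ^ j ≤ 3 := by
          have h3 : (1 + 1 / (K : ℝ)) ^ j ≤ Real.exp (1 / K) ^ j :=
            pow_le_pow_left₀ (by positivity) (by linarith [Real.add_one_le_exp (1 / (K : ℝ))]) _
          rw [← Real.exp_nat_mul] at h3
          have h4 : (j : ℝ) * (1 / K) ≤ 1 := by
            rw [mul_one_div, div_le_one hKr]; exact_mod_cast hj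
          have := Real.exp_le_exp.mpr h4
          linarith [Real.exp_one_lt_d9]
        calc (lam l + μ) ^ j ≤ ((1 + 1 / K) * lam l) ^ j :=
              pow_le_pow_left₀ (add_nonneg (hlam l) hμ) h1 _
          _ = (1 + 1 / (K : ℝ)) ^ j * lam l ^ j := mul_pow ..
          _ ≤ 3 * lam l ^ j := mul_le_mul_of_nonneg_right h2 hp1
          _ ≤ _ := by linarith
      · have : (lam l + μ) ^ j ≤ ((K + 1) * μ) ^ j :=
          pow_le_pow_left₀ (add_nonneg (hlam l) hμ) (by linarith) _
        linarith
    nlinarith [hw0 l]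

/-- The coordinate projection onto the set described by `ω`. -/
noncomputable def maskM {ι : Type*} [DecidableEq ι] (ω : ι → Bool) : Matrix ι ι ℝ :=
  diagonal fun e => if ω e then 1 else 0

theorem maskM_mulVec (ω : ι → Bool) (v : ι → ℝ) :
    maskM ω *ᵥ v = fun e => if ω e then v e else 0 := by
  ext e
  simp [maskM, mulVec_diagonal]

theorem maskM_transpose {ι : Type*} [DecidableEq ι] (ω : ι → Bool) : (maskM ω)ᵀ = maskM ω := by
  simp [maskM]

theorem maskM_mul_self (ω : ι → Bool) : maskM ω * maskM ω = maskM ω := by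
  simp [maskM, diagonal_mul_diagonal]

variable {G : Matrix ι ι ℝ}

theorem posSemidef_compression (hG : Gᵀ = G) (ω : ι → Bool) :
    (G * maskM ω * G).PosSemidef := by
  have h := posSemidef_conjTranspose_mul_self (maskM ω * G)
  rw [conjTranspose_eq_transpose_of_trivial, transpose_mul, maskM_transpose, hG] at h
  have e : G * maskM ω * (maskM ω * G) = G * maskM ω * G := by
    rw [Matrix.mul_assoc G, ← Matrix.mul_assoc (maskM ω), maskM_mul_self, Matrix.mul_assoc]
  rwa [e] at h

theorem trace_conj_eq (hG : Gᵀ = G) (A : Matrix ι ι ℝ) (d : ι → ℝ) :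
    (A * (G * diagonal d * G)).trace = ∑ e, d e * (G e ⬝ᵥ (A *ᵥ G e)) := by
  have h1 : (A * (G * diagonal d * G)).trace = ((G * A * G) * diagonal d).trace := by
    rw [← Matrix.mul_assoc, trace_mul_comm, ← Matrix.mul_assoc, ← Matrix.mul_assoc]
  rw [h1, trace]
  refine Finset.sum_congr rfl fun e _ => ?_
  rw [diag_apply, mul_diagonal, mul_comm]
  congr 1
  have hs : ∀ a b, G a b = G b a := fun a b => congrFun (congrFun hG b) a
  rw [Matrix.mul_assoc, Matrix.mul_apply]
  simp only [dotProduct, mulVec, Matrix.mul_apply, hs e]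

theorem compression_update (hG : Gᵀ = G) {ω : ι → Bool} {e : ι} (he : ω e = true) :
    G * maskM ω * G = G * maskM (Function.update ω e false) * G + vecMulVec (G e) (G e) := by
  have hm : maskM ω = maskM (Function.update ω e false) + Matrix.single e e 1 := by
    ext f g
    by_cases hfg : f = g
    · subst hfg
      by_cases hf : f = e
      · subst hf; simp [maskM, he]
      · simp [maskM, Function.update_of_ne hf, Ne.symm hf]
    · simp only [maskM, Matrix.add_apply, diagonal_apply_ne _ hfg, Matrix.single_apply]
      rw [if_neg]
      · simp
      · rintro ⟨rfl, rfl⟩; exact hfg rfl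
  rw [hm, Matrix.mul_add, Matrix.add_mul]
  congr 1
  ext f g
  have hs : ∀ a b, G a b = G b a := fun a b => congrFun (congrFun hG b) a
  simp [Matrix.mul_apply, Matrix.single_apply, vecMulVec_apply, ite_and, hs e]

/-- Trace moments of the compression of a projection to a Bernoulli set. -/
theorem sum_trace_pow_compression_le (hG : Gᵀ = G) (hG2 : G * G = G) {μ ρ : ℝ}
    (hμ : ∀ e, G e e ≤ μ) (hμ0 : 0 ≤ μ) (hμ1 : μ ≤ 1) (h0 : 0 ≤ ρ) (h1 : ρ ≤ 1) {K : ℕ}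
    (hK : 0 < K) (k : ℕ) (hk : k < K) :
    ∑ ω : ι → Bool, bernW ρ ω * ((G * maskM ω * G) ^ (k + 1)).trace
      ≤ (k + 1) * (4 * ρ + (K + 1) * μ) ^ (k + 1) * Fintype.card ι := by
  have hs : ∀ a b, G a b = G b a := fun a b => congrFun (congrFun hG b) a
  have hgg : ∀ e, G e ⬝ᵥ G e = G e e := by
    intro e
    have := congrFun (congrFun hG2 e) e
    rw [Matrix.mul_apply] at this
    rw [← this]
    exact Finset.sum_congr rfl fun f _ => by rw [hs f e]
  have htr : ∑ e, G e e ≤ Fintype.card ι := by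
    calc ∑ e, G e e ≤ ∑ e : ι, (1 : ℝ) := Finset.sum_le_sum fun e _ => (hμ e).trans hμ1
      _ = Fintype.card ι := by simp
  have htr0 : 0 ≤ ∑ e, G e e := Finset.sum_nonneg fun e _ => by
    rw [← hgg]; exact Finset.sum_nonneg fun f _ => mul_self_nonneg _
  set θ := (K + 1) * μ with hθ
  have hθ0 : 0 ≤ θ := by positivity
  have hexp : ∀ k ω, ((G * maskM ω * G) ^ (k + 1)).trace
      = ∑ e, (if ω e then G e ⬝ᵥ ((G * maskM ω * G) ^ k *ᵥ G e) else 0) := by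
    intro k ω
    rw [pow_succ]
    nth_rw 2 [maskM]
    rw [trace_conj_eq hG]
    exact Finset.sum_congr rfl fun e _ => by split_ifs <;> simp
  have hrec : ∀ k, k < K → ∑ ω : ι → Bool, bernW ρ ω * ((G * maskM ω * G) ^ (k + 1)).trace ≤
      ρ * (3 * ∑ ω : ι → Bool, bernW ρ ω * ∑ e, G e ⬝ᵥ ((G * maskM ω * G) ^ k *ᵥ G e)
        + θ ^ k * ∑ e, G e e) := by
    intro k hk
    have hpt : ∀ (ω : ι → Bool) (e : ι),
        (if ω e then G e ⬝ᵥ ((G * maskM ω * G) ^ k *ᵥ G e) else 0) ≤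
        (if ω e then 3 * (G e ⬝ᵥ ((G * maskM (Function.update ω e false) * G) ^ k *ᵥ G e))
          + θ ^ k * G e e else 0) := by
      intro ω e
      split_ifs with h
      · have := (rank_one_moment_bounds (posSemidef_compression hG (Function.update ω e false))
          ((hgg e).trans_le (hμ e)) hK hk.le).2
        rwa [← compression_update hG h, hgg] at this
      · exact le_rfl
    have hmono : ∀ (ω : ι → Bool) (e : ι),
        G e ⬝ᵥ ((G * maskM (Function.update ω e false) * G) ^ k *ᵥ G e) ≤
        G e ⬝ᵥ ((G * maskM ω * G) ^ k *ᵥ G e) := by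
      intro ω e
      cases h : ω e with
      | true =>
        have := (rank_one_moment_bounds (posSemidef_compression hG (Function.update ω e false))
          ((hgg e).trans_le (hμ e)) hK hk.le).1
        rwa [← compression_update hG h] at this
      | false => rw [Function.update_eq_self_iff.mpr h.symm]
    calc ∑ ω : ι → Bool, bernW ρ ω * ((G * maskM ω * G) ^ (k + 1)).trace
        ≤ ∑ ω : ι → Bool, bernW ρ ω * ∑ e,
          (if ω e then 3 * (G e ⬝ᵥ ((G * maskM (Function.update ω e false) * G) ^ k *ᵥ G e))
            + θ ^ k * G e e else 0) := by
          refine Finset.sum_le_sum fun ω _ => mul_le_mul_of_nonneg_left ?_ (bernW_nonneg h0 h1 ω)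
          rw [hexp]
          exact Finset.sum_le_sum fun e _ => hpt ω e
      _ = ∑ e, ρ * ∑ ω : ι → Bool, bernW ρ ω *
          (3 * (G e ⬝ᵥ ((G * maskM (Function.update ω e false) * G) ^ k *ᵥ G e))
            + θ ^ k * G e e) := by
          simp_rw [Finset.mul_sum]
          rw [Finset.sum_comm]
          refine Finset.sum_congr rfl fun e _ => ?_
          rw [← Finset.mul_sum]
          exact bernW_sum_coord ρ e (fun ω =>
            3 * (G e ⬝ᵥ ((G * maskM ω * G) ^ k *ᵥ G e)) + θ ^ k * G e e)
      _ ≤ ∑ e, ρ * ∑ ω : ι → Bool, bernW ρ ω *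
          (3 * (G e ⬝ᵥ ((G * maskM ω * G) ^ k *ᵥ G e)) + θ ^ k * G e e) := by
          refine Finset.sum_le_sum fun e _ => mul_le_mul_of_nonneg_left ?_ h0
          refine Finset.sum_le_sum fun ω _ => mul_le_mul_of_nonneg_left ?_ (bernW_nonneg h0 h1 ω)
          linarith [hmono ω e]
      _ = _ := by
          rw [← Finset.mul_sum, Finset.sum_comm]
          congr 1
          simp_rw [← Finset.mul_sum, Finset.sum_add_distrib, mul_add, Finset.sum_add_distrib,
            ← Finset.sum_mul, bernW_sum, one_mul, ← Finset.mul_sum]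
          congr 1
          rw [Finset.mul_sum]
          exact Finset.sum_congr rfl fun ω _ => by ring
  set s := 4 * ρ + θ with hsdef
  have hs0 : 0 ≤ s := by positivity
  have hρs : ρ ≤ s := by linarith
  have hθs : θ ≤ s := by linarith
  have hN : (0 : ℝ) ≤ Fintype.card ι := Nat.cast_nonneg _
  have hlow : ∀ k, ρ * (θ ^ k * ∑ e, G e e) ≤ s ^ (k + 1) * Fintype.card ι := by
    intro k
    calc ρ * (θ ^ k * ∑ e, G e e) ≤ s * (s ^ k * Fintype.card ι) := by gcongr
      _ = _ := by ring
  induction k with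
  | zero =>
    have h := hrec 0 hk
    simp only [pow_zero, Matrix.one_mulVec, hgg, ← Finset.sum_mul, bernW_sum] at h
    simp only [CharP.cast_eq_zero, zero_add, one_mul]
    refine h.trans ?_
    calc ρ * (3 * (1 * ∑ e, G e e) + 1 * ∑ e, G e e)
        = 4 * ρ * ∑ e, G e e := by ring
      _ ≤ s * Fintype.card ι := by gcongr; linarith
      _ = _ := by rw [pow_one]
  | succ k ih =>
    have h := hrec (k + 1) hk
    have ih' := ih (by omega)
    have htrace : ∀ ω : ι → Bool, ∑ e, G e ⬝ᵥ ((G * maskM ω * G) ^ (k + 1) *ᵥ G e)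
        = ((G * maskM ω * G) ^ (k + 1)).trace := by
      intro ω
      have := trace_conj_eq hG ((G * maskM ω * G) ^ (k + 1)) (fun _ => 1)
      simp only [one_mul] at this
      rw [← this, diagonal_one, Matrix.mul_one, hG2, pow_succ, Matrix.mul_assoc,
        Matrix.mul_assoc (G * maskM ω), hG2]
    simp only [htrace] at h
    refine h.trans ?_
    rw [mul_add]
    have h3 := hlow (k + 1)
    have h4 : ρ * (3 * ∑ ω : ι → Bool, bernW ρ ω * ((G * maskM ω * G) ^ (k + 1)).trace)
        ≤ s * ((k + 1) * s ^ (k + 1) * Fintype.card ι) := by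
      calc _ = 3 * ρ * ∑ ω : ι → Bool, bernW ρ ω * ((G * maskM ω * G) ^ (k + 1)).trace := by ring
        _ ≤ 3 * ρ * ((k + 1) * s ^ (k + 1) * Fintype.card ι) :=
            mul_le_mul_of_nonneg_left ih' (by positivity)
        _ ≤ _ := mul_le_mul_of_nonneg_right (by linarith) (by positivity)
    push_cast
    calc _ ≤ s * ((k + 1) * s ^ (k + 1) * Fintype.card ι)
          + s ^ (k + 1 + 1) * Fintype.card ι := add_le_add h4 h3
      _ = _ := by ring

/-- A bound on a high trace moment of a compression bounds its quadratic form. -/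
theorem compression_quadratic_le_of_trace (hG : Gᵀ = G) (ω : ι → Bool) {K : ℕ} (hK : 0 < K)
    {c : ℝ} (hc : 0 ≤ c) (h : ((G * maskM ω * G) ^ K).trace ≤ c ^ K) (x : ι → ℝ) :
    x ⬝ᵥ ((G * maskM ω * G) *ᵥ x) ≤ c * (x ⬝ᵥ x) := by
  obtain ⟨lam, hlam, htr, hq⟩ := (posSemidef_compression hG ω).exists_moments
  obtain ⟨w, hw, hwx⟩ := hq x
  have hle : ∀ l, lam l ≤ c := fun l => by
    refine le_of_pow_le_pow_left₀ hK.ne' hc (le_trans ?_ h)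
    rw [htr]
    exact Finset.single_le_sum (f := fun l => lam l ^ K)
      (fun l _ => pow_nonneg (hlam l) K) (Finset.mem_univ l)
  have h0 := hwx 0
  have h1 := hwx 1
  simp only [pow_zero, pow_one, Matrix.one_mulVec, mul_one] at h0 h1
  rw [h0, h1, Finset.mul_sum]
  exact Finset.sum_le_sum fun l _ => by nlinarith [hle l, hw l]

theorem wP_compression_quadratic_le (hG : Gᵀ = G) (hG2 : G * G = G) {μ ρ : ℝ}
    (hμ : ∀ e, G e e ≤ μ) (hμ0 : 0 ≤ μ) (hμ1 : μ ≤ 1) (h0 : 0 ≤ ρ) (h1 : ρ ≤ 1) {K : ℕ}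
    (hK : 0 < K) {c : ℝ} (hc : 0 < c) :
    wP (bernW ρ) (fun ω : ι → Bool => ¬ ∀ x : ι → ℝ,
        x ⬝ᵥ ((G * maskM ω * G) *ᵥ x) ≤ c * (x ⬝ᵥ x))
      ≤ K * ((4 * ρ + (K + 1) * μ) / c) ^ K * Fintype.card ι := by
  obtain ⟨k, rfl⟩ : ∃ k, K = k + 1 := ⟨K - 1, by omega⟩
  have hb := sum_trace_pow_compression_le hG hG2 hμ hμ0 hμ1 h0 h1 hK k (Nat.lt_succ_self k)
  have hnn : ∀ ω : ι → Bool, 0 ≤ ((G * maskM ω * G) ^ (k + 1)).trace := fun ω => by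
    obtain ⟨lam, hlam, htr, -⟩ := (posSemidef_compression hG ω).exists_moments
    rw [htr]
    exact Finset.sum_nonneg fun l _ => pow_nonneg (hlam l) _
  refine (wP_le_sum (fun ω => bernW_nonneg h0 h1 ω)
    (f := fun ω => ((G * maskM ω * G) ^ (k + 1)).trace / c ^ (k + 1))
    (fun ω => div_nonneg (hnn ω) (by positivity)) (fun ω hω => ?_)).trans ?_
  · rw [le_div_iff₀ (by positivity), one_mul]
    by_contra hlt
    exact hω (compression_quadratic_le_of_trace hG ω hK hc.le (not_le.mp hlt).le)
  · simp_rw [mul_div_assoc', ← Finset.sum_div]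
    rw [div_le_iff₀ (by positivity)]
    refine hb.trans (le_of_eq ?_)
    push_cast
    rw [div_pow]
    field_simp

end CompressionNorm

section Golfing

variable {ι : Type*} [Fintype ι] {G : Matrix ι ι ℝ}

theorem proj_row_sq_sum (hG : Gᵀ = G) (hG2 : G * G = G) (f : ι) : ∑ e, G f e ^ 2 = G f f := by
  have h := congrFun (congrFun hG2 f) f
  rw [Matrix.mul_apply] at h
  rw [← h]
  refine Finset.sum_congr rfl fun e _ => ?_
  rw [show G e f = G f e from congrFun (congrFun hG f) e, sq]

theorem abs_proj_entry_le (hG : Gᵀ = G) (hG2 : G * G = G) {μ : ℝ} (hμ : ∀ e, G e e ≤ μ)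
    (f e : ι) : |G f e| ≤ μ := by
  have h := congrFun (congrFun hG2 f) e
  rw [Matrix.mul_apply] at h
  have h' : ∑ k, G f k * G e k = G f e := by
    rw [← h]
    refine Finset.sum_congr rfl fun k _ => ?_
    rw [show G k e = G e k from congrFun (congrFun hG e) k]
  have hcs := Finset.sum_mul_sq_le_sq_mul_sq Finset.univ (G f) (G e)
  have h0 : ∀ f, 0 ≤ G f f := fun f => by
    rw [← proj_row_sq_sum hG hG2]; positivity
  rw [h', proj_row_sq_sum hG hG2, proj_row_sq_sum hG hG2] at hcs
  refine abs_le_of_sq_le_sq (hcs.trans ?_) ((h0 f).trans (hμ f))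
  rw [sq]
  exact mul_le_mul (hμ f) (hμ e) (h0 e) ((h0 f).trans (hμ f))

/-- The rescaled restriction of `Z` to the sampled entries. -/
noncomputable def sampleVec (q : ℝ) (b : ι → Bool) (Z : ι → ℝ) (e : ι) : ℝ :=
  if b e then q⁻¹ * Z e else 0

theorem wP_sampling_residual_le [DecidableEq ι] (hG : Gᵀ = G) (hG2 : G * G = G) {μ q z : ℝ}
    (hμ : ∀ e, G e e ≤ μ) (hμ0 : 0 < μ) (hq0 : 0 < q) (hq1 : q ≤ 1) (hz : 0 < z) {Z : ι → ℝ}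
    (hGZ : G *ᵥ Z = Z) (hZ : ∀ e, |Z e| ≤ z) :
    wP (bernW q) (fun b => ∃ f, z / 2 < |Z f - (G *ᵥ sampleVec q b Z) f|)
      ≤ Fintype.card ι * (2 * Real.exp (-(q / (16 * μ)))) := by
  have hw := fun b : ι → Bool => bernW_nonneg hq0.le hq1 b
  refine (wP_mono hw (F := fun b => ∃ f ∈ (Finset.univ : Finset ι),
    z / 2 < |Z f - (G *ᵥ sampleVec q b Z) f|) (by simp)).trans ?_
  refine (wP_exists hw _ _).trans ?_
  refine (Finset.sum_le_card_nsmul _ _ (2 * Real.exp (-(q / (16 * μ)))) fun f _ => ?_).trans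
    (by simp)
  set h : ι → Bool → ℝ := fun e x => (if x then 1 - q⁻¹ else 1) * (G f e * Z e) with hh
  have hval : ∀ b : ι → Bool, Z f - (G *ᵥ sampleVec q b Z) f = ∑ e, h e (b e) := by
    intro b
    have : Z f = ∑ e, G f e * Z e := (congrFun hGZ f).symm
    rw [this, Matrix.mulVec, dotProduct, ← Finset.sum_sub_distrib]
    refine Finset.sum_congr rfl fun e _ => ?_
    simp only [hh, sampleVec]
    split_ifs <;> ring
  have hqq : q * q⁻¹ = 1 := mul_inv_cancel₀ hq0.ne'
  have hqi : 1 ≤ q⁻¹ := (one_le_inv₀ hq0).mpr hq1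
  set τ := q / (4 * μ) with hτ
  have hτ0 : 0 < τ := by positivity
  have key : ∀ s : ℝ, |s| = τ / z → ∑ b : ι → Bool, bernW q b *
      Real.exp (s * (Z f - (G *ᵥ sampleVec q b Z) f)) ≤ Real.exp (q / (16 * μ)) := by
    intro s hs
    have hGZe : ∀ e, |s * (G f e * Z e)| ≤ τ * |G f e| := fun e => by
      rw [abs_mul, abs_mul, hs]
      calc τ / z * (|G f e| * |Z e|) ≤ τ / z * (|G f e| * z) := by gcongr; exact hZ e
        _ = _ := by field_simp
    have hsmall : ∀ e, |s * (G f e * Z e)| ≤ q / 4 := fun e => (hGZe e).trans <| by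
      calc τ * |G f e| ≤ τ * μ := by gcongr; exact abs_proj_entry_le hG hG2 hμ f e
        _ = q / 4 := by rw [hτ]; field_simp
    have := bernW_sum_exp_le hq0.le hq1 (fun e x => s * h e x)
      (fun e => τ ^ 2 * G f e ^ 2 / q) (fun e => ?_)
    · simp_rw [hval, Finset.mul_sum]
      refine this.trans (Real.exp_le_exp.mpr ?_)
      rw [← Finset.sum_div, ← Finset.mul_sum, proj_row_sq_sum hG hG2]
      calc τ ^ 2 * G f f / q ≤ τ ^ 2 * μ / q := by gcongr; exact hμ f
        _ = _ := by rw [hτ]; field_simp; norm_num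
    · have hA := hsmall e
      have hA2 : (s * (G f e * Z e)) ^ 2 ≤ τ ^ 2 * G f e ^ 2 := by
        have := pow_le_pow_left₀ (abs_nonneg _) (hGZe e) 2
        rwa [sq_abs, mul_pow τ, sq_abs] at this
      have e1 : s * h e true = (1 - q⁻¹) * (s * (G f e * Z e)) := by simp [hh]; ring
      have e2 : s * h e false = s * (G f e * Z e) := by simp [hh]
      simp only [e1, e2]
      set A := s * (G f e * Z e)
      refine two_point_exp_le_of_abs_le_one hq0.le hq1 ?_ ?_ ?_ ?_
      · linear_combination (-A) * hqq
      · rw [abs_mul, abs_sub_comm, abs_of_nonneg (by linarith)]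
        calc (q⁻¹ - 1) * |A| ≤ q⁻¹ * (q / 4) := by gcongr; linarith
          _ ≤ 1 := by linear_combination hqq / 4
      · linarith
      · have : q * ((1 - q⁻¹) * A) ^ 2 + (1 - q) * A ^ 2 = (q⁻¹ - 1) * A ^ 2 := by
          linear_combination (A ^ 2 * q⁻¹ - 2 * A ^ 2) * hqq
        rw [this, div_eq_inv_mul]
        calc (q⁻¹ - 1) * A ^ 2 ≤ q⁻¹ * A ^ 2 := by gcongr; linarith
          _ ≤ _ := by gcongr
  have hs0 : 0 < τ / z := by positivity
  refine (wP_abs_tail hw hs0 (key _ (abs_of_pos hs0))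
    (key _ (by rw [abs_neg, abs_of_pos hs0]))).trans (le_of_eq ?_)
  congr 2
  rw [hτ]
  field_simp
  norm_num

theorem SpecLe.add {n1 n2 : ℕ} {c d : ℝ} {X Y : Fin n1 × Fin n2 → ℝ} (hX : SpecLe c X)
    (hY : SpecLe d Y) : SpecLe (c + d) (X + Y) := by
  intro y x hy hx
  simp only [Pi.add_apply, mul_add, Finset.sum_add_distrib]
  exact add_le_add (hX y x hy hx) (hY y x hy hx)

theorem SpecLe.mono {n1 n2 : ℕ} {c d : ℝ} {X : Fin n1 × Fin n2 → ℝ} (hX : SpecLe c X)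
    (h : c ≤ d) : SpecLe d X := fun y x hy hx => (hX y x hy hx).trans h

theorem wP_sampling_spectral_le {n1 n2 : ℕ} (hn2 : 0 < n2) (hn : n2 ≤ n1) {q z : ℝ} (hq0 : 0 < q)
    (hq1 : q ≤ 1) (hz : 0 < z) {Z : Fin n1 × Fin n2 → ℝ} (hZ : ∀ e, |Z e| ≤ z) :
    wP (bernW q) (fun b => ¬ SpecLe (29 * (z / q) * Real.sqrt n1) (sampleVec q b Z - Z))
      ≤ Real.exp (-n1) := by
  have hqq : q * q⁻¹ = 1 := mul_inv_cancel₀ hq0.ne'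
  have hqi : 1 ≤ q⁻¹ := (one_le_inv₀ hq0).mpr hq1
  refine wP_not_specLe_le hn2 hn (bernW_nonneg hq0.le hq1) (fun b => sampleVec q b Z - Z)
    (κ := (z / q) ^ 2) (by positivity) (by positivity) (by nlinarith [sq_nonneg (z / q)]) ?_
  intro M
  have := bernW_sum_exp_le hq0.le hq1
    (fun e x => (if x then q⁻¹ - 1 else -1) * (M e * Z e))
    (fun e => (z / q) ^ 2 * M e ^ 2) (fun e => ?_)
  · rw [Finset.mul_sum]
    refine le_trans (le_of_eq ?_) this
    refine Finset.sum_congr rfl fun b _ => ?_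
    congr 3
    funext e
    simp only [sampleVec, Pi.sub_apply]
    split_ifs <;> ring
  · simp only [if_true, Bool.false_eq_true, if_false]
    have hA : (M e * Z e) ^ 2 ≤ M e ^ 2 * z ^ 2 := by
      rw [mul_pow]
      have := pow_le_pow_left₀ (abs_nonneg _) (hZ e) 2
      rw [sq_abs] at this
      gcongr
    have hq2 : (z / q) ^ 2 * M e ^ 2 = q⁻¹ ^ 2 * (M e ^ 2 * z ^ 2) := by
      rw [div_eq_mul_inv]; ring
    rw [hq2]
    refine two_point_exp_le hq0.le hq1 ?_ ?_ ?_
    · linear_combination (M e * Z e) * hqq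
    · rw [mul_pow]
      gcongr
      linarith
    · rw [mul_pow]
      refine mul_le_mul ?_ hA (sq_nonneg _) (by positivity)
      nlinarith

/-- The golfing scheme: iterated sampling outside `ω` produces an approximate
dual certificate with small entries and small spectral norm off the range of `G`. -/
theorem wP_golfing_le {n1 n2 : ℕ} (hn2 : 0 < n2) (hn : n2 ≤ n1)
    {G : Matrix (Fin n1 × Fin n2) (Fin n1 × Fin n2) ℝ} (hG : Gᵀ = G) (hG2 : G * G = G)
    {μ q : ℝ} (hμ : ∀ e, G e e ≤ μ) (hμ0 : 0 < μ) (hq0 : 0 < q) (hq1 : q ≤ 1)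
    (hperp : ∀ (c : ℝ) (X : Fin n1 × Fin n2 → ℝ), SpecLe c X → SpecLe c (X - G *ᵥ X))
    {p : ℝ} (hp0 : 0 ≤ p) (hp1 : p ≤ 1) (k : ℕ) (Z : Fin n1 × Fin n2 → ℝ) (z : ℝ) (hz : 0 < z)
    (hGZ : G *ᵥ Z = Z) (hZ : ∀ e, |Z e| ≤ z) :
    wP (bernW (p * (1 - q) ^ k)) (fun ω => ¬ ∃ Y : Fin n1 × Fin n2 → ℝ,
        (∀ e, ω e = true → Y e = 0) ∧ (∀ e, |Y e| ≤ 2 * (z / q)) ∧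
        SpecLe (58 * (z / q) * Real.sqrt n1) (Y - G *ᵥ Y) ∧
        ∀ e, |Z e - (G *ᵥ Y) e| ≤ z / 2 ^ k)
      ≤ k * (n1 * n2 * (2 * Real.exp (-(q / (16 * μ)))) + Real.exp (-n1)) := by
  set η := (n1 * n2 : ℝ) * (2 * Real.exp (-(q / (16 * μ)))) + Real.exp (-n1) with hη
  have hη0 : 0 ≤ η := by positivity
  have hq1' : 0 ≤ 1 - q := by linarith
  induction k generalizing Z z with
  | zero =>
    refine le_trans (le_of_eq ?_) (by positivity)
    unfold wP
    refine Finset.sum_eq_zero fun ω _ => if_neg (not_not.mpr ?_)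
    refine ⟨0, by simp, fun e => ?_, fun y x _ _ => ?_, fun e => ?_⟩
    · simp; positivity
    · simp; positivity
    · simpa using hZ e
  | succ k ih =>
    have hpk0 : 0 ≤ p * (1 - q) ^ k := by positivity
    have hpk1 : p * (1 - q) ^ k ≤ 1 :=
      mul_le_one₀ hp1 (by positivity) (pow_le_one₀ hq1' (by linarith))
    rw [pow_succ, ← mul_assoc, wP_thinning]
    set good : (Fin n1 × Fin n2 → Bool) → Prop := fun b =>
      (∀ f, |Z f - (G *ᵥ sampleVec q b Z) f| ≤ z / 2) ∧
      SpecLe (29 * (z / q) * Real.sqrt n1) (sampleVec q b Z - Z) with hgood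
    have hbad : wP (bernW q) (fun b => ¬ good b) ≤ η := by
      have h1 := wP_sampling_residual_le hG hG2 hμ hμ0 hq0 hq1 hz hGZ hZ
      have h2 := wP_sampling_spectral_le hn2 hn hq0 hq1 hz hZ
      refine (wP_mono (bernW_nonneg hq0.le hq1) fun b hb => ?_).trans
        ((wP_or (bernW_nonneg hq0.le hq1) _ _).trans (add_le_add (h1.trans_eq ?_) h2))
      · rw [hgood, not_and_or] at hb
        push Not at hb
        exact hb
      · simp
    have hstep : ∀ b, wP (bernW (p * (1 - q) ^ k)) (fun c => ¬ ∃ Y : Fin n1 × Fin n2 → ℝ,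
        (∀ e, (c e && !b e) = true → Y e = 0) ∧ (∀ e, |Y e| ≤ 2 * (z / q)) ∧
        SpecLe (58 * (z / q) * Real.sqrt n1) (Y - G *ᵥ Y) ∧
        ∀ e, |Z e - (G *ᵥ Y) e| ≤ z / 2 ^ (k + 1)) ≤ k * η + (open Classical in
          if ¬ good b then 1 else 0) := by
      intro b
      by_cases hb : good b
      · simp only [hb, not_true_eq_false, if_false, add_zero]
        have hGZ' : G *ᵥ (Z - G *ᵥ sampleVec q b Z) = Z - G *ᵥ sampleVec q b Z := by
          rw [Matrix.mulVec_sub, hGZ, Matrix.mulVec_mulVec, hG2]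
        refine (wP_mono (bernW_nonneg hpk0 hpk1) fun c hc => ?_).trans
          (ih (Z - G *ᵥ sampleVec q b Z) (z / 2) (by positivity) hGZ' hb.1)
        rintro ⟨Y, hY1, hY2, hY3, hY4⟩
        refine hc ⟨sampleVec q b Z + Y, fun e he => ?_, fun e => ?_, ?_, fun e => ?_⟩
        · simp only [Bool.and_eq_true, Bool.not_eq_true'] at he
          simp [sampleVec, he.2, hY1 e he.1]
        · have h1 : |sampleVec q b Z e| ≤ z / q := by
            unfold sampleVec
            split_ifs
            · rw [abs_mul, abs_of_pos (inv_pos.mpr hq0), div_eq_inv_mul]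
              gcongr
              exact hZ e
            · simp; positivity
          calc |(sampleVec q b Z + Y) e| ≤ |sampleVec q b Z e| + |Y e| := abs_add_le _ _
            _ ≤ z / q + 2 * (z / 2 / q) := add_le_add h1 (hY2 e)
            _ = _ := by ring
        · have h1 := (hperp _ _ hb.2).add hY3
          have : sampleVec q b Z + Y - G *ᵥ (sampleVec q b Z + Y)
              = sampleVec q b Z - Z - G *ᵥ (sampleVec q b Z - Z) + (Y - G *ᵥ Y) := by
            rw [Matrix.mulVec_add, Matrix.mulVec_sub, hGZ]; abel
          rw [this]
          exact h1.mono (le_of_eq (by ring))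
        · have := hY4 e
          rw [Matrix.mulVec_add, Pi.add_apply, ← sub_sub]
          refine this.trans (le_of_eq ?_)
          rw [pow_succ]; field_simp
      · simp only [hb, not_false_eq_true, if_true]
        exact (wP_bernW_le_one hpk0 hpk1 _).trans (by linarith [show 0 ≤ k * η by positivity])
    calc _ ≤ ∑ b, bernW q b * (k * η + (open Classical in if ¬ good b then 1 else 0)) :=
          Finset.sum_le_sum fun b _ =>
            mul_le_mul_of_nonneg_left (hstep b) (bernW_nonneg hq0.le hq1 b)
      _ = k * η + wP (bernW q) (fun b => ¬ good b) := by
          simp only [mul_add, Finset.sum_add_distrib, ← Finset.sum_mul, bernW_sum, one_mul, wP,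
            mul_ite, mul_one, mul_zero]
          congr!
      _ ≤ _ := by push_cast; linarith

end Golfing

section SignCertificate

variable {ι : Type*} [Fintype ι] [DecidableEq ι] {G : Matrix ι ι ℝ}

/-- The sign encoded by a Boolean. -/
noncomputable def boolSign (b : Bool) : ℝ := if b then 1 else -1

/-- The random sign pattern carried by the support `ω`. -/
noncomputable def signVec {ι : Type*} (ω s : ι → Bool) (e : ι) : ℝ :=
  if ω e then boolSign (s e) else 0

theorem sum_exp_boolSign_le (v : ι → ℝ) :
    ∑ s : ι → Bool, bernW (1 / 2) s * Real.exp (∑ e, v e * boolSign (s e))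
      ≤ Real.exp ((∑ e, v e ^ 2) / 2) := by
  rw [Finset.sum_div]
  refine bernW_sum_exp_le (by norm_num) (by norm_num) (fun e b => v e * boolSign b) _ fun e => ?_
  simpa [boolSign] using rademacher_exp_le (v e)

theorem sum_exp_signVec_le (ω : ι → Bool) (v : ι → ℝ) :
    ∑ s : ι → Bool, bernW (1 / 2) s * Real.exp (v ⬝ᵥ signVec ω s)
      ≤ Real.exp ((v ⬝ᵥ v) / 2) := by
  have h := sum_exp_boolSign_le (fun e => if ω e then v e else 0)
  have e1 : ∀ s : ι → Bool, v ⬝ᵥ signVec ω s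
      = ∑ e, (if ω e then v e else 0) * boolSign (s e) := fun s =>
    Finset.sum_congr rfl fun e _ => by simp only [signVec]; split_ifs <;> simp
  simp_rw [e1]
  refine h.trans (Real.exp_le_exp.mpr ?_)
  refine div_le_div_of_nonneg_right (Finset.sum_le_sum fun e _ => ?_) zero_le_two
  split_ifs
  · rw [sq]
  · rw [zero_pow two_ne_zero]; exact mul_self_nonneg _

theorem sum_exp_sparse_sign_le {κ ρ : ℝ} (hκ : 0 < κ) (h0 : 0 ≤ ρ)
    (hρ : ρ ≤ 2 * κ * Real.exp (-(1 / (2 * κ ^ 2)))) (h1 : ρ ≤ 1) (M : ι → ℝ) :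
    ∑ x : (ι → Bool) × (ι → Bool), bernW ρ x.1 * bernW (1 / 2) x.2 *
        Real.exp (∑ e, M e * signVec x.1 x.2 e)
      ≤ Real.exp (κ * ∑ e, M e ^ 2) := by
  obtain ⟨g, hg⟩ : ∃ g : ι → Bool → ℝ, ∀ e b, g e b
      = 1 / 2 * Real.exp (if b then M e else 0) + (1 - 1 / 2) * Real.exp (if b then -M e else 0) :=
    ⟨_, fun _ _ => rfl⟩
  rw [Fintype.sum_prod_type]
  have hin : ∀ ω : ι → Bool, ∑ s : ι → Bool, bernW ρ ω * bernW (1 / 2) s *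
      Real.exp (∑ e, M e * signVec ω s e) = bernW ρ ω * ∏ e, g e (ω e) := by
    intro ω
    have := bernW_sum_exp (1 / 2) (fun e b => M e * (if ω e then boolSign b else 0))
    simp_rw [mul_assoc, ← Finset.mul_sum]
    rw [show (∑ s : ι → Bool, bernW (1 / 2) s * Real.exp (∑ e, M e * signVec ω s e)) = _ from this]
    congr 1
    refine Finset.prod_congr rfl fun e _ => ?_
    rw [hg]
    cases ω e <;> simp [boolSign]
  rw [Finset.sum_congr rfl fun ω _ => hin ω, bernW_sum_prod, Finset.mul_sum, Real.exp_sum]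
  refine Finset.prod_le_prod (fun e _ => ?_) fun e _ => ?_
  · have : 0 ≤ 1 - ρ := by linarith
    have h2 : (0 : ℝ) ≤ 1 - 1 / 2 := by norm_num
    rw [hg, hg]
    positivity
  · refine le_trans (le_of_eq ?_) (sparse_sign_exp_le hκ h0 hρ h1 (M e))
    rw [hg, hg]
    simp only [if_true, Bool.false_eq_true, if_false, Real.exp_zero]
    ring

theorem wP_signVec_spectral_le {n1 n2 : ℕ} (hn2 : 0 < n2) (hn : n2 ≤ n1) {κ ρ τ : ℝ} (hκ : 0 < κ)
    (h0 : 0 ≤ ρ) (hρ : ρ ≤ 2 * κ * Real.exp (-(1 / (2 * κ ^ 2)))) (h1 : ρ ≤ 1) (hτ : 0 < τ)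
    (hκτ : 832 * κ ≤ τ ^ 2) :
    wP (fun x : (Fin n1 × Fin n2 → Bool) × (Fin n1 × Fin n2 → Bool) =>
        bernW ρ x.1 * bernW (1 / 2) x.2)
      (fun x => ¬ SpecLe (τ * Real.sqrt n1) (signVec x.1 x.2)) ≤ Real.exp (-n1) := by
  have hw : ∀ x : (Fin n1 × Fin n2 → Bool) × (Fin n1 × Fin n2 → Bool),
      0 ≤ bernW ρ x.1 * bernW (1 / 2) x.2 := fun x =>
    mul_nonneg (bernW_nonneg h0 h1 _) (bernW_nonneg (by norm_num) (by norm_num) _)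
  exact wP_not_specLe_le hn2 hn hw (fun x => signVec x.1 x.2) hκ hτ hκτ
    fun M => sum_exp_sparse_sign_le hκ h0 hρ h1 M

theorem dotProduct_maskM_mulVec_le (ω : ι → Bool) (v : ι → ℝ) :
    (maskM ω *ᵥ v) ⬝ᵥ (maskM ω *ᵥ v) ≤ v ⬝ᵥ v := by
  rw [maskM_mulVec]
  refine Finset.sum_le_sum fun e _ => ?_
  simp only
  split_ifs
  · exact le_rfl
  · rw [mul_zero]; exact mul_self_nonneg _

theorem dotProduct_maskM_mul_mulVec (hG : Gᵀ = G) (ω : ι → Bool) (x : ι → ℝ) :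
    ((maskM ω * G) *ᵥ x) ⬝ᵥ ((maskM ω * G) *ᵥ x) = x ⬝ᵥ ((G * maskM ω * G) *ᵥ x) := by
  rw [Matrix.dotProduct_mulVec, ← Matrix.mulVec_transpose, transpose_mul, hG, maskM_transpose,
    Matrix.mulVec_mulVec, dotProduct_comm, Matrix.mul_assoc G, ← Matrix.mul_assoc (maskM ω),
    maskM_mul_self, Matrix.mul_assoc]

/-- A Neumann-type inverse of `1 - A` for a symmetric contraction `A`. -/
theorem exists_inverse_of_contraction {A : Matrix ι ι ℝ} (hA : Aᵀ = A) {c : ℝ} (hc : c ≤ 1 / 4)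
    (hAx : ∀ x, (A *ᵥ x) ⬝ᵥ (A *ᵥ x) ≤ c * (x ⬝ᵥ x)) :
    ∃ Q : Matrix ι ι ℝ, Qᵀ = Q ∧ Q = 1 + A * Q ∧ (∀ v, (Q *ᵥ v) ⬝ᵥ (Q *ᵥ v) ≤ 4 * (v ⬝ᵥ v)) := by
  have hnn : ∀ v : ι → ℝ, 0 ≤ v ⬝ᵥ v := fun v => Finset.sum_nonneg fun e _ => mul_self_nonneg _
  have hbound : ∀ u v : ι → ℝ, u = v + A *ᵥ u → u ⬝ᵥ u ≤ 4 * (v ⬝ᵥ v) := by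
    intro u v h
    have h1 := hAx u
    have h2 : u ⬝ᵥ u ≤ 2 * (v ⬝ᵥ v) + 2 * ((A *ᵥ u) ⬝ᵥ (A *ᵥ u)) := by
      have h3 := hnn (v - A *ᵥ u)
      nth_rw 1 [h]
      nth_rw 2 [h]
      simp only [sub_dotProduct, dotProduct_sub, add_dotProduct, dotProduct_add] at h3 ⊢
      linarith
    nlinarith [hnn u, hnn v]
  have hinj : IsUnit (1 - A) := by
    rw [← Matrix.mulVec_injective_iff_isUnit]
    intro x y hxy
    have h0 : (1 - A) *ᵥ (x - y) = 0 := by rw [Matrix.mulVec_sub, sub_eq_zero]; exact hxy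
    rw [Matrix.sub_mulVec, Matrix.one_mulVec, sub_eq_zero] at h0
    have h1 := hbound (x - y) 0 (by rw [zero_add]; exact h0)
    rw [zero_dotProduct, mul_zero] at h1
    exact sub_eq_zero.mp (dotProduct_self_eq_zero.mp (le_antisymm h1 (hnn _)))
  have hdet : IsUnit (1 - A).det := (Matrix.isUnit_iff_isUnit_det _).mp hinj
  have hQ : (1 - A)⁻¹ = 1 + A * (1 - A)⁻¹ := by
    have := Matrix.mul_nonsing_inv (1 - A) hdet
    rw [Matrix.sub_mul, Matrix.one_mul] at this
    exact sub_eq_iff_eq_add.mp this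
  refine ⟨(1 - A)⁻¹, ?_, hQ, fun v => hbound _ _ ?_⟩
  · rw [Matrix.transpose_nonsing_inv, transpose_sub, transpose_one, hA]
  · nth_rw 1 [hQ]
    rw [Matrix.add_mulVec, Matrix.one_mulVec, Matrix.mulVec_mulVec]

/-- The dual variable attached to the random signs exists with high probability. -/
theorem wP_sign_certificate_le {n1 n2 : ℕ} (hn2 : 0 < n2) (hn : n2 ≤ n1)
    {G : Matrix (Fin n1 × Fin n2) (Fin n1 × Fin n2) ℝ} (hG : Gᵀ = G) (hG2 : G * G = G)
    {μ : ℝ} (hμ : ∀ e, G e e ≤ μ) (hμ0 : 0 < μ) (ω : Fin n1 × Fin n2 → Bool)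
    (hω : ∀ x, x ⬝ᵥ ((G * maskM ω * G) *ᵥ x) ≤ 1 / 160000 * (x ⬝ᵥ x)) :
    wP (bernW (1 / 2)) (fun s => ¬ ∃ H : Fin n1 × Fin n2 → ℝ,
        (∀ e, ω e = false → H e = 0) ∧ (∀ e, ω e = true → H e - (G *ᵥ H) e = boolSign (s e)) ∧
        SpecLe (1 / 8 * Real.sqrt n1) (H - signVec ω s) ∧ ∀ e, |(G *ᵥ H) e| ≤ 1 / 4)
      ≤ Real.exp (-n1) + n1 * n2 * (2 * Real.exp (-(1 / (128 * μ)))) := by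
  have hnn : ∀ v : Fin n1 × Fin n2 → ℝ, 0 ≤ v ⬝ᵥ v :=
    fun v => Finset.sum_nonneg fun e _ => mul_self_nonneg _
  set D := maskM ω with hD
  set A := D * G * D with hAdef
  have hDT : Dᵀ = D := maskM_transpose ω
  have hA : Aᵀ = A := by
    rw [hAdef, transpose_mul, transpose_mul, hDT, hG, Matrix.mul_assoc]
  have hAx : ∀ x, (A *ᵥ x) ⬝ᵥ (A *ᵥ x) ≤ 1 / 160000 * (x ⬝ᵥ x) := by
    intro x
    rw [hAdef, ← Matrix.mulVec_mulVec, dotProduct_maskM_mul_mulVec hG]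
    refine (hω _).trans (mul_le_mul_of_nonneg_left ?_ (by norm_num))
    exact dotProduct_maskM_mulVec_le ω x
  obtain ⟨Q, hQT, hQ, hQn⟩ := exists_inverse_of_contraction hA (by norm_num) hAx
  have hw := fun s : Fin n1 × Fin n2 → Bool =>
    bernW_nonneg (p := 1 / 2) (by norm_num) (by norm_num) s
  have hRT : (A * Q)ᵀ = A * Q := by
    have : A * Q = Q - 1 := by nth_rw 2 [hQ]; abel
    rw [this, transpose_sub, transpose_one, hQT]
  have hQs : ∀ v : Fin n1 × Fin n2 → ℝ, Q *ᵥ v = v + A *ᵥ (Q *ᵥ v) := by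
    intro v
    nth_rw 1 [hQ]
    rw [Matrix.add_mulVec, Matrix.one_mulVec, Matrix.mulVec_mulVec]
  have hspec : wP (bernW (1 / 2))
      (fun s => ¬ SpecLe (1 / 8 * Real.sqrt n1) (Q *ᵥ signVec ω s - signVec ω s))
      ≤ Real.exp (-n1) := by
    refine wP_not_specLe_le hn2 hn hw (fun s => Q *ᵥ signVec ω s - signVec ω s)
      (κ := 1 / 80000) (by norm_num) (by norm_num) (by norm_num) fun M => ?_
    have e1 : ∀ s, ∑ e, M e * (Q *ᵥ signVec ω s - signVec ω s) e
        = ((A * Q) *ᵥ M) ⬝ᵥ signVec ω s := by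
      intro s
      have : Q *ᵥ signVec ω s - signVec ω s = (A * Q) *ᵥ signVec ω s := by
        rw [hQs, add_sub_cancel_left, Matrix.mulVec_mulVec]
      rw [this]
      change M ⬝ᵥ _ = _
      rw [Matrix.dotProduct_mulVec, ← Matrix.mulVec_transpose, hRT]
    simp_rw [e1]
    refine (sum_exp_signVec_le ω _).trans (Real.exp_le_exp.mpr ?_)
    rw [← Matrix.mulVec_mulVec]
    have h1 := hAx (Q *ᵥ M)
    have h2 := hQn M
    have h3 : M ⬝ᵥ M = ∑ e, M e ^ 2 := Finset.sum_congr rfl fun e _ => (sq _).symm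
    rw [← h3]
    linarith
  have hent : wP (bernW (1 / 2)) (fun s => ∃ f, 1 / 4 < |(G *ᵥ (Q *ᵥ signVec ω s)) f|)
      ≤ n1 * n2 * (2 * Real.exp (-(1 / (128 * μ)))) := by
    refine (wP_mono hw (F := fun s => ∃ f ∈ (Finset.univ : Finset (Fin n1 × Fin n2)),
      1 / 4 < |(G *ᵥ (Q *ᵥ signVec ω s)) f|) (by simp)).trans ?_
    refine (wP_exists hw _ _).trans ?_
    refine (Finset.sum_le_card_nsmul _ _ (2 * Real.exp (-(1 / (128 * μ)))) fun f _ => ?_).trans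
      (by simp)
    have key : ∀ t : ℝ, |t| = 1 / (16 * μ) → ∑ s, bernW (1 / 2) s *
        Real.exp (t * (G *ᵥ (Q *ᵥ signVec ω s)) f) ≤ Real.exp (1 / (128 * μ)) := by
      intro t ht
      have e1 : ∀ s, t * (G *ᵥ (Q *ᵥ signVec ω s)) f = (t • (Q *ᵥ G f)) ⬝ᵥ signVec ω s := by
        intro s
        rw [smul_dotProduct, smul_eq_mul]
        congr 1
        change G f ⬝ᵥ _ = _
        rw [Matrix.dotProduct_mulVec, ← Matrix.mulVec_transpose, hQT]
      simp_rw [e1]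
      refine (sum_exp_signVec_le ω _).trans (Real.exp_le_exp.mpr ?_)
      rw [smul_dotProduct, dotProduct_smul, smul_eq_mul, smul_eq_mul, ← mul_assoc, ← sq,
        ← sq_abs, ht]
      have h1 : G f ⬝ᵥ G f = G f f := by
        rw [← proj_row_sq_sum hG hG2]
        exact Finset.sum_congr rfl fun e _ => (sq _).symm
      have h2 := hQn (G f)
      have h3 := hμ f
      calc (1 / (16 * μ)) ^ 2 * ((Q *ᵥ G f) ⬝ᵥ (Q *ᵥ G f)) / 2
          ≤ (1 / (16 * μ)) ^ 2 * (4 * μ) / 2 := by gcongr; linarith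
        _ = _ := by field_simp; norm_num
    have ht0 : 0 < 1 / (16 * μ) := by positivity
    refine (wP_abs_tail hw ht0 (key _ (abs_of_pos ht0))
      (key _ (by rw [abs_neg, abs_of_pos ht0]))).trans (le_of_eq ?_)
    congr 2
    field_simp
    norm_num
  refine (wP_mono hw fun s hs => ?_).trans ((wP_or hw _ _).trans (add_le_add hspec hent))
  by_contra hcon
  push Not at hcon
  have hoff : ∀ e, ω e = false → (Q *ᵥ signVec ω s) e = 0 := by
    intro e he
    rw [hQs, hAdef, Matrix.mul_assoc, ← Matrix.mulVec_mulVec, hD, maskM_mulVec]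
    simp [signVec, he]
  refine hs ⟨Q *ᵥ signVec ω s, hoff, fun e he => ?_, hcon.1, hcon.2⟩
  have hDH : D *ᵥ (Q *ᵥ signVec ω s) = Q *ᵥ signVec ω s := by
    rw [hD, maskM_mulVec]
    funext e
    by_cases h : ω e = true
    · simp [h]
    · simp [h, hoff e (by simpa using h)]
  have h1 := congrFun (hQs (signVec ω s)) e
  rw [hAdef, ← Matrix.mulVec_mulVec, hDH, ← Matrix.mulVec_mulVec] at h1
  simp only [hD, maskM_mulVec, Pi.add_apply, he, if_true, signVec] at h1
  linarith

end SignCertificate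

section TangentProjection

/-- A matrix as a function on pairs of indices. -/
def flat {n1 n2 : ℕ} (M : Matrix (Fin n1) (Fin n2) ℝ) (e : Fin n1 × Fin n2) : ℝ := M e.1 e.2

theorem exists_flat_eq {n1 n2 : ℕ} (X : Fin n1 × Fin n2 → ℝ) :
    ∃ M : Matrix (Fin n1) (Fin n2) ℝ, X = flat M := ⟨Matrix.of fun i j => X (i, j), rfl⟩

theorem specLe_flat_iff {n1 n2 : ℕ} {c : ℝ} {M : Matrix (Fin n1) (Fin n2) ℝ} :
    SpecLe c (flat M) ↔ ∀ (y : Fin n1 → ℝ) (x : Fin n2 → ℝ), y ⬝ᵥ y ≤ 1 → x ⬝ᵥ x ≤ 1 →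
      y ⬝ᵥ (M *ᵥ x) ≤ c := by
  have e1 : ∀ {n : ℕ} (v : Fin n → ℝ), v ⬝ᵥ v = ∑ i, v i ^ 2 := fun v =>
    Finset.sum_congr rfl fun i _ => (sq _).symm
  have e2 : ∀ (y : Fin n1 → ℝ) (x : Fin n2 → ℝ),
      y ⬝ᵥ (M *ᵥ x) = ∑ i, ∑ j, y i * x j * flat M (i, j) := fun y x => by
    simp only [dotProduct, mulVec, Finset.mul_sum, flat]
    exact Finset.sum_congr rfl fun i _ => Finset.sum_congr rfl fun j _ => by ring
  unfold SpecLe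
  simp only [e1, e2]

theorem dotProduct_self_nonneg_real {n : ℕ} (v : Fin n → ℝ) : 0 ≤ v ⬝ᵥ v :=
  Finset.sum_nonneg fun i _ => mul_self_nonneg (v i)

/-- Homogeneous form of a spectral bound. -/
theorem SpecLe.bilin_le {n1 n2 : ℕ} {M : Matrix (Fin n1) (Fin n2) ℝ} (h : SpecLe 1 (flat M))
    (y : Fin n1 → ℝ) (x : Fin n2 → ℝ) :
    y ⬝ᵥ (M *ᵥ x) ≤ Real.sqrt (y ⬝ᵥ y) * Real.sqrt (x ⬝ᵥ x) := by
  rcases (dotProduct_self_nonneg_real y).eq_or_lt with hy | hy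
  · rw [dotProduct_self_eq_zero.mp hy.symm]; simp
  rcases (dotProduct_self_nonneg_real x).eq_or_lt with hx | hx
  · rw [dotProduct_self_eq_zero.mp hx.symm]; simp
  have hunit : ∀ {n : ℕ} (v : Fin n → ℝ), 0 < v ⬝ᵥ v →
      ((Real.sqrt (v ⬝ᵥ v))⁻¹ • v) ⬝ᵥ ((Real.sqrt (v ⬝ᵥ v))⁻¹ • v) ≤ 1 := fun v hv => by
    rw [smul_dotProduct, dotProduct_smul, smul_eq_mul, smul_eq_mul, ← mul_assoc, ← mul_inv,
      Real.mul_self_sqrt hv.le, inv_mul_cancel₀ hv.ne']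
  have h1 := specLe_flat_iff.mp h _ _ (hunit y hy) (hunit x hx)
  have hsy := Real.sqrt_pos.mpr hy
  have hsx := Real.sqrt_pos.mpr hx
  rw [Matrix.mulVec_smul, smul_dotProduct, dotProduct_smul, smul_eq_mul, smul_eq_mul, ← mul_assoc,
    ← mul_inv, inv_mul_le_iff₀ (by positivity), mul_one] at h1
  exact h1

variable {n1 n2 r : ℕ}

/-- The orthogonal projection onto the complement of the column space of `U`. -/
def coProj {n : ℕ} (U : Matrix (Fin n) (Fin r) ℝ) : Matrix (Fin n) (Fin n) ℝ := 1 - U * Uᵀ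

theorem coProj_transpose {n : ℕ} (U : Matrix (Fin n) (Fin r) ℝ) : (coProj U)ᵀ = coProj U := by
  simp [coProj, transpose_mul]

theorem coProj_mul {n : ℕ} {U : Matrix (Fin n) (Fin r) ℝ} (hU : Uᵀ * U = 1) :
    coProj U * U = 0 := by
  rw [coProj, Matrix.sub_mul, Matrix.one_mul, Matrix.mul_assoc, hU, Matrix.mul_one, sub_self]

theorem coProj_mul_self {n : ℕ} {U : Matrix (Fin n) (Fin r) ℝ} (hU : Uᵀ * U = 1) :
    coProj U * coProj U = coProj U := by
  nth_rw 2 [coProj]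
  rw [Matrix.mul_sub, Matrix.mul_one, ← Matrix.mul_assoc, coProj_mul hU, Matrix.zero_mul, sub_zero]

theorem dotProduct_coProj_add {n : ℕ} {U : Matrix (Fin n) (Fin r) ℝ} (hU : Uᵀ * U = 1)
    (y : Fin n → ℝ) :
    (Uᵀ *ᵥ y) ⬝ᵥ (Uᵀ *ᵥ y) + (coProj U *ᵥ y) ⬝ᵥ (coProj U *ᵥ y) = y ⬝ᵥ y := by
  have h1 : (Uᵀ *ᵥ y) ⬝ᵥ (Uᵀ *ᵥ y) = y ⬝ᵥ ((U * Uᵀ) *ᵥ y) := by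
    rw [Matrix.dotProduct_mulVec, ← Matrix.mulVec_transpose, transpose_transpose,
      Matrix.mulVec_mulVec, dotProduct_comm]
  have h2 : (coProj U *ᵥ y) ⬝ᵥ (coProj U *ᵥ y) = y ⬝ᵥ (coProj U *ᵥ y) := by
    rw [Matrix.dotProduct_mulVec, ← Matrix.mulVec_transpose, coProj_transpose,
      Matrix.mulVec_mulVec, coProj_mul_self hU, dotProduct_comm]
  rw [h1, h2, ← dotProduct_add, ← Matrix.add_mulVec]
  simp [coProj]

/-- The orthogonal projection onto the tangent space of `U` and `V`. -/
def tangentProj (U : Matrix (Fin n1) (Fin r) ℝ) (V : Matrix (Fin n2) (Fin r) ℝ) :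
    Matrix (Fin n1 × Fin n2) (Fin n1 × Fin n2) ℝ :=
  1 - Matrix.kroneckerMap (· * ·) (coProj U) (coProj V)

variable {U : Matrix (Fin n1) (Fin r) ℝ} {V : Matrix (Fin n2) (Fin r) ℝ}

theorem tangentProj_transpose : (tangentProj U V)ᵀ = tangentProj U V := by
  rw [tangentProj, transpose_sub, transpose_one, ← Matrix.kroneckerMap_transpose,
    coProj_transpose, coProj_transpose]

theorem tangentProj_mul_self (hU : Uᵀ * U = 1) (hV : Vᵀ * V = 1) :
    tangentProj U V * tangentProj U V = tangentProj U V := by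
  have h : Matrix.kroneckerMap (· * ·) (coProj U) (coProj V) *
      Matrix.kroneckerMap (· * ·) (coProj U) (coProj V)
      = Matrix.kroneckerMap (· * ·) (coProj U) (coProj V) := by
    rw [← Matrix.mul_kronecker_mul, coProj_mul_self hU, coProj_mul_self hV]
  rw [tangentProj, Matrix.sub_mul, Matrix.mul_sub, Matrix.mul_sub, h]
  simp

theorem tangentProj_mulVec_flat (M : Matrix (Fin n1) (Fin n2) ℝ) :
    tangentProj U V *ᵥ flat M = flat M - flat (coProj U * M * coProj V) := by
  rw [tangentProj, Matrix.sub_mulVec, Matrix.one_mulVec]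
  congr 1
  funext e
  have hV : ∀ j j', coProj V j j' = coProj V j' j := fun j j' =>
    congrFun (congrFun (coProj_transpose V) j') j
  simp only [mulVec, dotProduct, Fintype.sum_prod_type, kroneckerMap_apply, flat, mul_apply,
    Finset.sum_mul]
  rw [Finset.sum_comm]
  refine Finset.sum_congr rfl fun j _ => Finset.sum_congr rfl fun i _ => ?_
  rw [hV e.2 j]; ring

theorem tangentProj_diag_le {μ : ℝ} (hU : ∀ i, ∑ k, U i k ^ 2 ≤ μ) (hV : ∀ j, ∑ k, V j k ^ 2 ≤ μ)
    (e : Fin n1 × Fin n2) : tangentProj U V e e ≤ 2 * μ := by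
  have h : ∀ {n : ℕ} (U : Matrix (Fin n) (Fin r) ℝ) (i : Fin n),
      coProj U i i = 1 - ∑ k, U i k ^ 2 := fun U i => by
    simp only [coProj, Matrix.sub_apply, one_apply_eq, Matrix.mul_apply, transpose_apply, sq]
  have h1 := hU e.1
  have h2 := hV e.2
  have h3 : 0 ≤ ∑ k, U e.1 k ^ 2 := by positivity
  have h4 : 0 ≤ ∑ k, V e.2 k ^ 2 := by positivity
  rw [tangentProj, Matrix.sub_apply, one_apply_eq, kroneckerMap_apply, h, h]
  nlinarith

theorem SpecLe.sub_tangentProj (hU : Uᵀ * U = 1) (hV : Vᵀ * V = 1) (c : ℝ)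
    (X : Fin n1 × Fin n2 → ℝ) (hX : SpecLe c X) : SpecLe c (X - tangentProj U V *ᵥ X) := by
  obtain ⟨M, rfl⟩ := exists_flat_eq X
  rw [tangentProj_mulVec_flat, sub_sub_cancel]
  rw [specLe_flat_iff] at hX ⊢
  intro y x hy hx
  have h1 := dotProduct_coProj_add hU y
  have h2 := dotProduct_coProj_add hV x
  have h3 := dotProduct_self_nonneg_real (Uᵀ *ᵥ y)
  have h4 := dotProduct_self_nonneg_real (Vᵀ *ᵥ x)
  have := hX (coProj U *ᵥ y) (coProj V *ᵥ x) (by linarith) (by linarith)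
  refine le_trans (le_of_eq ?_) this
  rw [Matrix.mul_assoc, ← Matrix.mulVec_mulVec, Matrix.dotProduct_mulVec,
    ← Matrix.mulVec_transpose, coProj_transpose, ← Matrix.mulVec_mulVec]

theorem tangentProj_mulVec_factor (hU : Uᵀ * U = 1) :
    tangentProj U V *ᵥ flat (U * Vᵀ) = flat (U * Vᵀ) := by
  rw [tangentProj_mulVec_flat, ← Matrix.mul_assoc, coProj_mul hU]
  simp only [Matrix.zero_mul]
  exact sub_zero _

theorem eq_coProj_of_tangentProj_eq_zero {M : Matrix (Fin n1) (Fin n2) ℝ}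
    (h : tangentProj U V *ᵥ flat M = 0) : M = coProj U * M * coProj V := by
  rw [tangentProj_mulVec_flat, sub_eq_zero] at h
  ext i j
  exact congrFun h (i, j)

/-- `UVᵀ` plus a contraction orthogonal to the tangent space is a contraction. -/
theorem specLe_factor_add (hU : Uᵀ * U = 1) (hV : Vᵀ * V = 1) {X : Fin n1 × Fin n2 → ℝ}
    (hX : SpecLe 1 X) (h0 : tangentProj U V *ᵥ X = 0) : SpecLe 1 (flat (U * Vᵀ) + X) := by
  obtain ⟨M, rfl⟩ := exists_flat_eq X
  have hM := eq_coProj_of_tangentProj_eq_zero h0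
  rw [show flat (U * Vᵀ) + flat M = flat (U * Vᵀ + M) from rfl, specLe_flat_iff]
  intro y x hy hx
  have h1 := dotProduct_coProj_add hU y
  have h2 := dotProduct_coProj_add hV x
  have e1 : y ⬝ᵥ ((U * Vᵀ) *ᵥ x) = (Uᵀ *ᵥ y) ⬝ᵥ (Vᵀ *ᵥ x) := by
    rw [← Matrix.mulVec_mulVec, Matrix.dotProduct_mulVec, ← Matrix.mulVec_transpose]
  have e2 : y ⬝ᵥ (M *ᵥ x) = (coProj U *ᵥ y) ⬝ᵥ (M *ᵥ (coProj V *ᵥ x)) := by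
    nth_rw 1 [hM]
    rw [Matrix.mul_assoc, ← Matrix.mulVec_mulVec, Matrix.dotProduct_mulVec,
      ← Matrix.mulVec_transpose, coProj_transpose, ← Matrix.mulVec_mulVec]
  rw [Matrix.add_mulVec, dotProduct_add, e1, e2]
  have h3 := hX.bilin_le (coProj U *ᵥ y) (coProj V *ᵥ x)
  have h4 : (Uᵀ *ᵥ y) ⬝ᵥ (Vᵀ *ᵥ x) ≤ ((Uᵀ *ᵥ y) ⬝ᵥ (Uᵀ *ᵥ y) + (Vᵀ *ᵥ x) ⬝ᵥ (Vᵀ *ᵥ x)) / 2 := by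
    have := dotProduct_self_nonneg_real (Uᵀ *ᵥ y - Vᵀ *ᵥ x)
    simp only [sub_dotProduct, dotProduct_sub] at this
    rw [dotProduct_comm (Vᵀ *ᵥ x) (Uᵀ *ᵥ y)] at this
    linarith
  have h5 := sq_nonneg (Real.sqrt ((coProj U *ᵥ y) ⬝ᵥ (coProj U *ᵥ y))
    - Real.sqrt ((coProj V *ᵥ x) ⬝ᵥ (coProj V *ᵥ x)))
  have h6 := Real.sq_sqrt (dotProduct_self_nonneg_real (coProj U *ᵥ y))
  have h7 := Real.sq_sqrt (dotProduct_self_nonneg_real (coProj V *ᵥ x))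
  nlinarith

theorem flat_dotProduct_svd (σ : Fin r → ℝ) (B : Matrix (Fin n1) (Fin n2) ℝ) :
    flat (U * diagonal σ * Vᵀ) ⬝ᵥ flat B = ∑ k, σ k * (Uᵀ * B * V) k k := by
  have h : flat (U * diagonal σ * Vᵀ) ⬝ᵥ flat B = (B * (U * diagonal σ * Vᵀ)ᵀ).trace := by
    rw [dotProduct, Fintype.sum_prod_type, trace]
    refine Finset.sum_congr rfl fun i _ => ?_
    rw [diag_apply, Matrix.mul_apply]
    exact Finset.sum_congr rfl fun j _ => mul_comm _ _
  rw [h, transpose_mul, transpose_mul, transpose_transpose, diagonal_transpose,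
    Matrix.trace_mul_comm, Matrix.mul_assoc, Matrix.trace_mul_comm, Matrix.mul_assoc (diagonal σ),
    Matrix.mul_assoc (diagonal σ), trace]
  simp [diagonal_mul]

theorem flat_svd_dotProduct_le (hU : Uᵀ * U = 1) (hV : Vᵀ * V = 1) {σ : Fin r → ℝ}
    (hσ : ∀ k, 0 < σ k) {B : Matrix (Fin n1) (Fin n2) ℝ} (hB : SpecLe 1 (flat B)) :
    flat (U * diagonal σ * Vᵀ) ⬝ᵥ flat B ≤ ∑ k, σ k := by
  rw [flat_dotProduct_svd]
  refine Finset.sum_le_sum fun k _ => mul_le_of_le_one_right (hσ k).le ?_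
  have hcol : ∀ {n : ℕ} {W : Matrix (Fin n) (Fin r) ℝ}, Wᵀ * W = 1 →
      (fun i => W i k) ⬝ᵥ (fun i => W i k) ≤ 1 := fun {n W} hW => by
    have := congrFun (congrFun hW k) k
    rw [mul_apply, one_apply_eq] at this
    exact this.le
  have := specLe_flat_iff.mp hB _ _ (hcol hU) (hcol hV)
  refine le_trans (le_of_eq ?_) this
  rw [Matrix.mul_assoc, mul_apply]
  rfl

theorem flat_svd_dotProduct_factor_add (hU : Uᵀ * U = 1) (hV : Vᵀ * V = 1) (σ : Fin r → ℝ)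
    {X : Fin n1 × Fin n2 → ℝ} (h0 : tangentProj U V *ᵥ X = 0) :
    flat (U * diagonal σ * Vᵀ) ⬝ᵥ (flat (U * Vᵀ) + X) = ∑ k, σ k := by
  obtain ⟨M, rfl⟩ := exists_flat_eq X
  have hM := eq_coProj_of_tangentProj_eq_zero h0
  have hz : Uᵀ * M = 0 := by
    have h1 : Uᵀ * coProj U = 0 := by
      rw [← coProj_transpose, ← transpose_mul, coProj_mul hU, transpose_zero]
    rw [hM, ← Matrix.mul_assoc, ← Matrix.mul_assoc, h1, Matrix.zero_mul, Matrix.zero_mul]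
  rw [dotProduct_add, flat_dotProduct_svd, flat_dotProduct_svd, hz, ← Matrix.mul_assoc, hU,
    Matrix.one_mul, hV]
  simp

end TangentProjection

section NormDuality

variable {n1 n2 : ℕ}

theorem minner_eq_dotProduct (A B : Matrix (Fin n1) (Fin n2) ℝ) :
    minner A B = flat A ⬝ᵥ flat B := by
  simp only [minner, dotProduct, Fintype.sum_prod_type, flat]

theorem frob_eq_sqrt (A : Matrix (Fin n1) (Fin n2) ℝ) :
    frob A = Real.sqrt (flat A ⬝ᵥ flat A) := by
  simp only [frob, dotProduct, Fintype.sum_prod_type, flat, sq]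

theorem dotProduct_le_sqrt_mul_sqrt {ι : Type*} [Fintype ι] (u v : ι → ℝ) :
    u ⬝ᵥ v ≤ Real.sqrt (u ⬝ᵥ u) * Real.sqrt (v ⬝ᵥ v) := by
  have := Real.sum_mul_le_sqrt_mul_sqrt Finset.univ u v
  simpa only [dotProduct, sq] using this

theorem sqrt_dotProduct_add_le {ι : Type*} [Fintype ι] (u v : ι → ℝ) :
    Real.sqrt ((u + v) ⬝ᵥ (u + v)) ≤ Real.sqrt (u ⬝ᵥ u) + Real.sqrt (v ⬝ᵥ v) := by
  have hnn : ∀ w : ι → ℝ, 0 ≤ w ⬝ᵥ w := fun w => Finset.sum_nonneg fun e _ => mul_self_nonneg _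
  refine Real.sqrt_le_iff.mpr ⟨by positivity, ?_⟩
  have h := dotProduct_le_sqrt_mul_sqrt u v
  rw [add_sq, Real.sq_sqrt (hnn u), Real.sq_sqrt (hnn v)]
  simp only [add_dotProduct, dotProduct_add, dotProduct_comm v u]
  linarith

theorem specLe_of_dotProduct_le {X : Fin n1 × Fin n2 → ℝ} (h : X ⬝ᵥ X ≤ 1) : SpecLe 1 X := by
  intro y x hy hx
  have h1 := dotProduct_le_sqrt_mul_sqrt (fun e : Fin n1 × Fin n2 => y e.1 * x e.2) X
  have h2 : (fun e : Fin n1 × Fin n2 => y e.1 * x e.2) ⬝ᵥ (fun e => y e.1 * x e.2) ≤ 1 := by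
    have : (fun e : Fin n1 × Fin n2 => y e.1 * x e.2) ⬝ᵥ (fun e => y e.1 * x e.2)
        = (∑ i, y i ^ 2) * ∑ j, x j ^ 2 := by
      rw [Finset.sum_mul_sum, dotProduct, Fintype.sum_prod_type]
      exact Finset.sum_congr rfl fun i _ => Finset.sum_congr rfl fun j _ => by ring
    rw [this]
    exact mul_le_one₀ hy (by positivity) hx
  rw [dotProduct, Fintype.sum_prod_type] at h1
  refine h1.trans (mul_le_one₀ (Real.sqrt_le_one.mpr h2) (Real.sqrt_nonneg _)
    (Real.sqrt_le_one.mpr h))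

theorem spec_le_one_iff {B : Matrix (Fin n1) (Fin n2) ℝ} : spec B ≤ 1 ↔ SpecLe 1 (flat B) := by
  have e1 : ∀ {n : ℕ} (v : Fin n → ℝ), v ⬝ᵥ v = ∑ i, v i ^ 2 := fun v =>
    Finset.sum_congr rfl fun i _ => (sq _).symm
  have e2 : ∀ x : Fin n2 → ℝ, Real.sqrt (∑ i, (∑ j, B i j * x j) ^ 2)
      = Real.sqrt ((B *ᵥ x) ⬝ᵥ (B *ᵥ x)) := fun x => by rw [e1]; rfl
  constructor
  · intro h
    rw [specLe_flat_iff]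
    intro y x hy hx
    have hb : BddAbove {c : ℝ | ∃ x : Fin n2 → ℝ, (∑ j, x j ^ 2) ≤ 1 ∧
        c = Real.sqrt (∑ i, (∑ j, B i j * x j) ^ 2)} := by
      refine ⟨Real.sqrt (∑ i, ∑ j, B i j ^ 2), ?_⟩
      rintro _ ⟨x, hx, rfl⟩
      refine Real.sqrt_le_sqrt (Finset.sum_le_sum fun i _ => ?_)
      refine (Finset.sum_mul_sq_le_sq_mul_sq _ _ _).trans ?_
      exact mul_le_of_le_one_right (by positivity) hx
    have h1 : Real.sqrt ((B *ᵥ x) ⬝ᵥ (B *ᵥ x)) ≤ 1 :=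
      (le_csSup hb ⟨x, (e1 x) ▸ hx, (e2 x).symm⟩).trans h
    exact (dotProduct_le_sqrt_mul_sqrt _ _).trans
      (mul_le_one₀ (Real.sqrt_le_one.mpr hy) (Real.sqrt_nonneg _) h1)
  · intro h
    refine csSup_le ⟨_, 0, by simp, rfl⟩ ?_
    rintro _ ⟨x, hx, rfl⟩
    rw [e2]
    have h1 := h.bilin_le (B *ᵥ x) x
    rw [← e1] at hx
    have h2 := Real.sqrt_le_one.mpr hx
    have h3 := Real.mul_self_sqrt (dotProduct_self_nonneg_real (B *ᵥ x))
    set t := Real.sqrt ((B *ᵥ x) ⬝ᵥ (B *ᵥ x))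
    have ht : 0 ≤ t := Real.sqrt_nonneg _
    have h4 : t * Real.sqrt (x ⬝ᵥ x) ≤ t := mul_le_of_le_one_right ht h2
    nlinarith

theorem abs_entry_le_of_specLe {X : Fin n1 × Fin n2 → ℝ} (h : SpecLe 1 X)
    (e : Fin n1 × Fin n2) : |X e| ≤ 1 := by
  have hs : ∀ {n : ℕ} (k : Fin n) (t : ℝ), t ^ 2 = 1 → ∑ i, (Pi.single k t : Fin n → ℝ) i ^ 2 ≤ 1 :=
    fun k t ht => by
      rw [Finset.sum_eq_single k (fun i _ hi => by simp [hi]) (by simp)]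
      simp [ht]
  have key : ∀ t : ℝ, t ^ 2 = 1 → t * X e ≤ 1 := fun t ht => by
    have := h (Pi.single e.1 t) (Pi.single e.2 1) (hs _ _ ht) (hs _ _ (one_pow 2))
    rw [Finset.sum_eq_single e.1 (fun i _ hi => by simp [hi]) (by simp),
      Finset.sum_eq_single e.2 (fun j _ hj => by simp [hj]) (by simp)] at this
    simpa using this
  have h1 := key 1 (by norm_num)
  have h2 := key (-1) (by norm_num)
  exact abs_le.mpr ⟨by linarith, by linarith⟩

theorem dotProduct_le_nuc (A : Matrix (Fin n1) (Fin n2) ℝ) {X : Fin n1 × Fin n2 → ℝ}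
    (hX : SpecLe 1 X) : flat A ⬝ᵥ X ≤ nuc A := by
  obtain ⟨B, rfl⟩ := exists_flat_eq X
  refine le_csSup ⟨∑ e, |flat A e|, ?_⟩ ⟨B, spec_le_one_iff.mpr hX, (minner_eq_dotProduct A B).symm⟩
  rintro _ ⟨B, hB, rfl⟩
  rw [minner_eq_dotProduct]
  refine Finset.sum_le_sum fun e _ => (le_abs_self _).trans ?_
  rw [abs_mul]
  exact mul_le_of_le_one_right (abs_nonneg _) (abs_entry_le_of_specLe (spec_le_one_iff.mp hB) e)

theorem nuc_le {A : Matrix (Fin n1) (Fin n2) ℝ} {c : ℝ}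
    (h : ∀ B : Matrix (Fin n1) (Fin n2) ℝ, SpecLe 1 (flat B) → flat A ⬝ᵥ flat B ≤ c) :
    nuc A ≤ c := by
  refine csSup_le ⟨_, 0, spec_le_one_iff.mpr ?_, rfl⟩ ?_
  · exact specLe_of_dotProduct_le (by simp [dotProduct, flat])
  · rintro _ ⟨B, hB, rfl⟩
    rw [minner_eq_dotProduct]
    exact h B (spec_le_one_iff.mp hB)

end NormDuality

section Certificate

variable {n1 n2 : ℕ}

theorem SpecLe.smul {c t : ℝ} {X : Fin n1 × Fin n2 → ℝ} (h : SpecLe c X) (ht : 0 ≤ t) :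
    SpecLe (t * c) (t • X) := by
  intro y x hy hx
  have := mul_le_mul_of_nonneg_left (h y x hy hx) ht
  refine le_trans (le_of_eq ?_) this
  simp only [Finset.mul_sum, Pi.smul_apply, smul_eq_mul]
  exact Finset.sum_congr rfl fun i _ => Finset.sum_congr rfl fun j _ => by ring

/-- The golfing and sign dual variables combine to an approximate dual certificate. -/
theorem exists_dual_certificate {G : Matrix (Fin n1 × Fin n2) (Fin n1 × Fin n2) ℝ}
    (hG2 : G * G = G)
    (hperp : ∀ (c : ℝ) (X : Fin n1 × Fin n2 → ℝ), SpecLe c X → SpecLe c (X - G *ᵥ X))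
    {ω s : Fin n1 × Fin n2 → Bool} {Z Y H : Fin n1 × Fin n2 → ℝ} {lam a b : ℝ} (hlam : 0 < lam)
    (hlam1 : lam * Real.sqrt n1 = 1) (ha : a ≤ lam / 8) (hb : b ≤ lam / 8)
    (hY0 : ∀ e, ω e = true → Y e = 0) (hYa : ∀ e, |Y e| ≤ a) (hYs : SpecLe (1 / 4) (Y - G *ᵥ Y))
    (hZ : ∀ e, |Z e - (G *ᵥ Y) e| ≤ b) (hH0 : ∀ e, ω e = false → H e = 0)
    (hH : ∀ e, ω e = true → H e - (G *ᵥ H) e = boolSign (s e))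
    (hHs : SpecLe (1 / 8 * Real.sqrt n1) (H - signVec ω s))
    (hE : SpecLe (1 / 8 * Real.sqrt n1) (signVec ω s)) (hGH : ∀ e, |(G *ᵥ H) e| ≤ 1 / 4) :
    ∃ W : Fin n1 × Fin n2 → ℝ, G *ᵥ W = 0 ∧ SpecLe (1 / 2) W ∧
      (∀ e, ω e = false → |Z e + W e| ≤ lam / 2) ∧
      ∀ e, ω e = true → |Z e + W e - lam * boolSign (s e)| ≤ b := by
  refine ⟨(Y - G *ᵥ Y) + lam • (H - G *ᵥ H), ?_, ?_, fun e he => ?_, fun e he => ?_⟩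
  · have h : ∀ X : Fin n1 × Fin n2 → ℝ, G *ᵥ (X - G *ᵥ X) = 0 := fun X => by
      rw [Matrix.mulVec_sub, Matrix.mulVec_mulVec, hG2, sub_self]
    rw [Matrix.mulVec_add, Matrix.mulVec_smul, h, h, smul_zero, add_zero]
  · have h1 := hHs.add hE
    rw [sub_add_cancel] at h1
    refine (hYs.add ((hperp _ _ h1).smul hlam.le)).mono (le_of_eq ?_)
    linear_combination (1 / 4) * hlam1
  · have h1 := abs_le.mp (hYa e)
    have h2 := abs_le.mp (hZ e)
    have h3 := abs_le.mp (hGH e)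
    simp only [Pi.add_apply, Pi.sub_apply, Pi.smul_apply, smul_eq_mul, hH0 e he]
    exact abs_le.mpr ⟨by nlinarith, by nlinarith⟩
  · have h2 := hZ e
    simp only [Pi.add_apply, Pi.sub_apply, Pi.smul_apply, smul_eq_mul, hH e he, hY0 e he]
    convert h2 using 2
    ring

/-- Scalar inequalities turning the optimality gap into the recovery bound. -/
theorem recovery_scalar_bound {s t δ lam a b P x : ℝ} (hs : 2 ≤ s) (ht : 1 ≤ t) (hδ : 0 ≤ δ)
    (hlam : lam * s = 1) (ha : 0 ≤ a) (hb : 0 ≤ b) (hP : 0 ≤ P) (hx : 0 ≤ x)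
    (hgap : a / 2 + lam / 2 * b - lam / 8 * P ≤ lam * (s * t * (2 * δ))) (hPab : P ≤ b + 2 * a)
    (hxx : x ^ 2 = P ^ 2 + b ^ 2) :
    x ^ 2 + (x + 2 * δ) ^ 2 ≤ (320 * (s ^ 2 * t ^ 2) + 4) * δ ^ 2 := by
  set β := s * t * δ with hβ
  have hst : 1 ≤ s * t := by nlinarith
  have hδβ : δ ≤ β := le_mul_of_one_le_left hδ hst
  have h1 : s * a / 2 + b / 2 - P / 8 ≤ 2 * β := by
    have := mul_le_mul_of_nonneg_left hgap (by linarith : 0 ≤ s)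
    have e1 : s * (a / 2 + lam / 2 * b - lam / 8 * P) = s * a / 2 + b / 2 - P / 8 := by
      linear_combination (b / 2 - P / 8) * hlam
    have e2 : s * (lam * (s * t * (2 * δ))) = 2 * β := by
      rw [hβ]; linear_combination (2 * s * t * δ) * hlam
    rwa [e1, e2] at this
  have h2 : b + 2 * a ≤ 16 / 3 * β := by nlinarith
  have hβ0 : 0 ≤ β := hδ.trans hδβ
  have hP' : P ≤ 16 / 3 * β := hPab.trans h2
  have hb' : b ≤ 16 / 3 * β := by linarith
  have hx2 : x ^ 2 ≤ 57 * β ^ 2 := by nlinarith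
  have hx8 : x ≤ 8 * β := by
    refine (sq_le_sq₀ hx (by positivity)).mp ?_
    nlinarith [sq_nonneg β]
  have hβ2 : s ^ 2 * t ^ 2 * δ ^ 2 = β ^ 2 := by rw [hβ]; ring
  have : (320 * (s ^ 2 * t ^ 2) + 4) * δ ^ 2 = 320 * β ^ 2 + 4 * δ ^ 2 := by
    rw [← hβ2]; ring
  rw [this]
  nlinarith [mul_le_mul hx8 hδβ hδ (by positivity)]

/-- A dual certificate bounds the error of every perturbation with nonpositive gap. -/
theorem recovery_of_gap {ι : Type*} [Fintype ι] [DecidableEq ι] {G : Matrix ι ι ℝ}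
    (hG : Gᵀ = G) {ω s : ι → Bool}
    (hω : ∀ x, x ⬝ᵥ ((G * maskM ω * G) *ᵥ x) ≤ 1 / 4 * (x ⬝ᵥ x)) {Γ S N E : ι → ℝ}
    {p t δ lam ε : ℝ} (hp : 2 ≤ p) (ht : 1 ≤ t) (hcard : (Fintype.card ι : ℝ) = p ^ 2 * t ^ 2)
    (hδ : 0 ≤ δ) (hlam : lam * p = 1) (hε0 : 0 ≤ ε) (hε : ε * (p * t) ≤ lam / 8)
    (hΓ0 : ∀ e, ω e = false → |Γ e| ≤ lam / 2)
    (hΓ1 : ∀ e, ω e = true → |Γ e - lam * boolSign (s e)| ≤ ε)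
    (hS0 : ∀ e, ω e = false → S e = 0) (hS1 : ∀ e, ω e = true → |S e| = boolSign (s e) * S e)
    (hE : Real.sqrt (E ⬝ᵥ E) ≤ 2 * δ)
    (hgap : N ⬝ᵥ Γ + 1 / 2 * Real.sqrt ((N - G *ᵥ N) ⬝ᵥ (N - G *ᵥ N))
      + lam * ∑ e, (|S e + (E e - N e)| - |S e|) ≤ 0) :
    N ⬝ᵥ N + (E - N) ⬝ᵥ (E - N) ≤ (320 * (p ^ 2 * t ^ 2) + 4) * δ ^ 2 := by
  have hnn : ∀ v : ι → ℝ, 0 ≤ v ⬝ᵥ v := fun v => Finset.sum_nonneg fun e _ => mul_self_nonneg _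
  have hl1 : ∀ v : ι → ℝ, ∑ e, |v e| ≤ p * t * Real.sqrt (v ⬝ᵥ v) := by
    intro v
    have := Real.sum_mul_le_sqrt_mul_sqrt Finset.univ (fun _ => (1 : ℝ)) (fun e => |v e|)
    simp only [one_mul, one_pow, Finset.sum_const, Finset.card_univ, nsmul_eq_mul, mul_one,
      sq_abs, hcard] at this
    rw [← mul_pow, Real.sqrt_sq (by positivity)] at this
    simpa only [dotProduct, ← sq] using this
  have hlam0 : 0 < lam := pos_of_mul_pos_left (hlam ▸ one_pos) (by linarith)
  set N1 := maskM ω *ᵥ N with hN1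
  have hN1e : ∀ e, N1 e = if ω e then N e else 0 := fun e => by rw [hN1, maskM_mulVec]
  set N0 := N - N1 with hN0
  have hN0e : ∀ e, N0 e = if ω e then 0 else N e := fun e => by
    rw [hN0, Pi.sub_apply, hN1e]; split_ifs <;> simp
  set a := Real.sqrt ((N - G *ᵥ N) ⬝ᵥ (N - G *ᵥ N)) with ha
  set b := Real.sqrt (N0 ⬝ᵥ N0) with hb
  set P := Real.sqrt (N1 ⬝ᵥ N1) with hP
  set x := Real.sqrt (N ⬝ᵥ N) with hx
  have hpoint : ∀ e, lam / 2 * |N0 e| - ε * |N1 e| - lam * |E e|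
      ≤ N e * Γ e + lam * (|S e + (E e - N e)| - |S e|) := by
    intro e
    rw [hN0e, hN1e]
    cases hωe : ω e with
    | true =>
      have h1 := hΓ1 e hωe
      have h2 := hS1 e hωe
      have hsg : boolSign (s e) = 1 ∨ boolSign (s e) = -1 := by
        unfold boolSign; split_ifs <;> simp
      have h3 : boolSign (s e) * (S e + (E e - N e)) ≤ |S e + (E e - N e)| := by
        rcases hsg with h | h <;> rw [h]
        · linarith [le_abs_self (S e + (E e - N e))]
        · linarith [neg_abs_le (S e + (E e - N e))]
      have h4 : -|E e| ≤ boolSign (s e) * E e := by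
        rcases hsg with h | h <;> rw [h]
        · linarith [neg_abs_le (E e)]
        · linarith [le_abs_self (E e)]
      have h5 : -(|N e| * ε) ≤ N e * (Γ e - lam * boolSign (s e)) := by
        have := neg_abs_le (N e * (Γ e - lam * boolSign (s e)))
        rw [abs_mul] at this
        nlinarith [abs_nonneg (N e)]
      simp only [if_true, abs_zero]
      have h6 := mul_le_mul_of_nonneg_left (add_le_add h3 h4) hlam0.le
      rw [h2]
      nlinarith
    | false =>
      have h1 := hΓ0 e hωe
      have h5 : -(|N e| * (lam / 2)) ≤ N e * Γ e := by
        have := neg_abs_le (N e * Γ e)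
        rw [abs_mul] at this
        nlinarith [abs_nonneg (N e)]
      have h3 : |N e| - |E e| ≤ |E e - N e| := by
        rw [abs_sub_comm]; exact abs_sub_abs_le_abs_sub _ _
      simp only [hS0 e hωe, Bool.false_eq_true, if_false, abs_zero, zero_add, sub_zero, mul_zero]
      have h6 := mul_le_mul_of_nonneg_left h3 hlam0.le
      linarith
  have hsum := Finset.sum_le_sum fun e (_ : e ∈ Finset.univ) => hpoint e
  simp only [Finset.sum_sub_distrib, Finset.sum_add_distrib, ← Finset.mul_sum] at hsum hgap
  have hb1 : b ≤ ∑ e, |N0 e| := by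
    refine Real.sqrt_le_iff.mpr ⟨by positivity, ?_⟩
    have := Finset.sum_sq_le_sq_sum_of_nonneg (s := Finset.univ) (f := fun e => |N0 e|)
      (fun e _ => abs_nonneg _)
    simpa only [sq_abs, dotProduct, ← sq] using this
  have hP1 := hl1 N1
  have hE1 := hl1 E
  have hxx : x ^ 2 = P ^ 2 + b ^ 2 := by
    rw [hx, hP, hb, Real.sq_sqrt (hnn _), Real.sq_sqrt (hnn _), Real.sq_sqrt (hnn _)]
    simp only [dotProduct, ← Finset.sum_add_distrib, hN0e, hN1e]
    exact Finset.sum_congr rfl fun e _ => by split_ifs <;> ring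
  have hPab : P ≤ b + 2 * a := by
    have h1 : Real.sqrt ((maskM ω *ᵥ (G *ᵥ N)) ⬝ᵥ (maskM ω *ᵥ (G *ᵥ N))) ≤ 1 / 2 * x := by
      refine Real.sqrt_le_iff.mpr ⟨by positivity, ?_⟩
      rw [Matrix.mulVec_mulVec, dotProduct_maskM_mul_mulVec hG, mul_pow, hx, Real.sq_sqrt (hnn N)]
      exact (hω N).trans (by norm_num)
    have h2 : Real.sqrt ((maskM ω *ᵥ (N - G *ᵥ N)) ⬝ᵥ (maskM ω *ᵥ (N - G *ᵥ N))) ≤ a :=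
      Real.sqrt_le_sqrt (dotProduct_maskM_mulVec_le ω _)
    have h3 : P ≤ 1 / 2 * x + a := by
      have := sqrt_dotProduct_add_le (maskM ω *ᵥ (G *ᵥ N)) (maskM ω *ᵥ (N - G *ᵥ N))
      rw [← Matrix.mulVec_add, add_sub_cancel] at this
      linarith
    have h4 : x ≤ P + b := by
      have := sqrt_dotProduct_add_le N1 N0
      rwa [hN0, add_sub_cancel] at this
    linarith
  have hgap' : a / 2 + lam / 2 * b - lam / 8 * P ≤ lam * (p * t * (2 * δ)) := by
    have h1 : lam / 2 * b ≤ lam / 2 * ∑ e, |N0 e| := by gcongr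
    have h2 : ε * ∑ e, |N1 e| ≤ lam / 8 * P := by
      calc ε * ∑ e, |N1 e| ≤ ε * (p * t * P) := by gcongr
        _ = ε * (p * t) * P := by ring
        _ ≤ _ := by gcongr
    have h3 : lam * ∑ e, |E e| ≤ lam * (p * t * (2 * δ)) := by
      gcongr
      exact hE1.trans (by gcongr)
    have h4 : N ⬝ᵥ Γ = ∑ e, N e * Γ e := rfl
    linarith
  have hfin := recovery_scalar_bound hp ht hδ hlam (Real.sqrt_nonneg _) (Real.sqrt_nonneg _)
    (Real.sqrt_nonneg _) (Real.sqrt_nonneg _) hgap' hPab hxx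
  refine le_trans (add_le_add (Real.sq_sqrt (hnn N)).ge ?_) hfin
  have h5 : Real.sqrt ((E - N) ⬝ᵥ (E - N)) ≤ x + 2 * δ := by
    have := sqrt_dotProduct_add_le E (-N)
    rw [neg_dotProduct_neg, ← sub_eq_add_neg] at this
    linarith
  rw [← Real.sq_sqrt (hnn (E - N))]
  gcongr

end Certificate

section Recovery

variable {n1 n2 r : ℕ} {U : Matrix (Fin n1) (Fin r) ℝ} {V : Matrix (Fin n2) (Fin r) ℝ}

/-- Subgradient inequality for the nuclear norm at `UΣVᵀ`. -/
theorem le_nuc_of_certificate (hU : Uᵀ * U = 1) (hV : Vᵀ * V = 1) (σ : Fin r → ℝ)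
    {W : Fin n1 × Fin n2 → ℝ} (hW0 : tangentProj U V *ᵥ W = 0) (hW : SpecLe (1 / 2) W)
    (L : Matrix (Fin n1) (Fin n2) ℝ) {N : Fin n1 × Fin n2 → ℝ}
    (hN : flat L = flat (U * diagonal σ * Vᵀ) + N) :
    ∑ k, σ k + N ⬝ᵥ (flat (U * Vᵀ) + W) + 1 / 2 * Real.sqrt
      ((N - tangentProj U V *ᵥ N) ⬝ᵥ (N - tangentProj U V *ᵥ N)) ≤ nuc L := by
  set G := tangentProj U V with hG
  set R := N - G *ᵥ N with hR
  set a := Real.sqrt (R ⬝ᵥ R) with ha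
  have hRR : 0 ≤ R ⬝ᵥ R := Finset.sum_nonneg fun e _ => mul_self_nonneg _
  have ha2 : R ⬝ᵥ R = a * a := (Real.mul_self_sqrt hRR).symm
  have hGR : G *ᵥ R = 0 := by
    rw [hR, Matrix.mulVec_sub, Matrix.mulVec_mulVec, hG, tangentProj_mul_self hU hV, sub_self]
  have hNR : N ⬝ᵥ R = a * a := by
    have h1 : (G *ᵥ N) ⬝ᵥ R = 0 := by
      rw [dotProduct_comm, Matrix.dotProduct_mulVec, ← Matrix.mulVec_transpose, hG,
        tangentProj_transpose, ← hG, hGR, zero_dotProduct]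
    rw [← ha2]
    nth_rw 2 [hR]
    rw [sub_dotProduct, h1, sub_zero]
  have hB : SpecLe 1 (a⁻¹ • R) := by
    refine specLe_of_dotProduct_le ?_
    rw [smul_dotProduct, dotProduct_smul, ha2, smul_eq_mul, smul_eq_mul]
    rcases eq_or_ne a 0 with h | h
    · simp [h]
    · exact le_of_eq (by field_simp)
  have hX : SpecLe 1 (W + (1 / 2 : ℝ) • (a⁻¹ • R)) :=
    (hW.add (hB.smul (by norm_num))).mono (by norm_num)
  have hX0 : G *ᵥ (W + (1 / 2 : ℝ) • (a⁻¹ • R)) = 0 := by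
    rw [Matrix.mulVec_add, Matrix.mulVec_smul, Matrix.mulVec_smul, hGR, hW0]; simp
  have h := dotProduct_le_nuc L (specLe_factor_add hU hV hX hX0)
  rw [hN, add_dotProduct, flat_svd_dotProduct_factor_add hU hV σ hX0, ← add_assoc,
    dotProduct_add N, dotProduct_smul, dotProduct_smul, hNR, smul_eq_mul, smul_eq_mul] at h
  have e : a⁻¹ * (a * a) = a := by
    rcases eq_or_ne a 0 with h | h
    · simp [h]
    · field_simp
  rw [e] at h
  linarith

theorem l1norm_eq_sum (A : Matrix (Fin n1) (Fin n2) ℝ) : l1norm A = ∑ e, |flat A e| := by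
  rw [l1norm, Fintype.sum_prod_type]; rfl

/-- Deterministic recovery from an approximate dual certificate. -/
theorem pairDist_le_of_certificate (hn2 : 0 < n2) (hn1 : 4 ≤ n1) (hU : Uᵀ * U = 1)
    (hV : Vᵀ * V = 1) {σ : Fin r → ℝ} (hσ : ∀ k, 0 < σ k) {b s : Fin n1 × Fin n2 → Bool}
    (hb : ∀ x, x ⬝ᵥ ((tangentProj U V * maskM b * tangentProj U V) *ᵥ x) ≤ 1 / 4 * (x ⬝ᵥ x))
    {S0 : Matrix (Fin n1) (Fin n2) ℝ} (hS0 : ∀ e, b e = false → flat S0 e = 0)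
    (hS1 : ∀ e, b e = true → |flat S0 e| = boolSign (s e) * flat S0 e)
    {W : Fin n1 × Fin n2 → ℝ} (hW0 : tangentProj U V *ᵥ W = 0) (hW : SpecLe (1 / 2) W) {ε : ℝ}
    (hε0 : 0 ≤ ε) (hε : ε * (Real.sqrt n1 * Real.sqrt n2) ≤ (Real.sqrt n1)⁻¹ / 8)
    (hΓ0 : ∀ e, b e = false → |flat (U * Vᵀ) e + W e| ≤ (Real.sqrt n1)⁻¹ / 2)
    (hΓ1 : ∀ e, b e = true →
      |flat (U * Vᵀ) e + W e - (Real.sqrt n1)⁻¹ * boolSign (s e)| ≤ ε)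
    {δ : ℝ} {Z0 Lh Sh : Matrix (Fin n1) (Fin n2) ℝ} (hδ : 0 ≤ δ) (hZ : frob Z0 ≤ δ)
    (hmin : IsStablePCPMin (U * diagonal σ * Vᵀ + S0 + Z0) (Real.sqrt n1)⁻¹ δ Lh Sh) :
    pairDist Lh Sh (U * diagonal σ * Vᵀ) S0 ≤ Real.sqrt (320 * (n1 : ℝ) * n2 + 4) * δ := by
  set L0 := U * diagonal σ * Vᵀ with hL0
  set lam := (Real.sqrt n1)⁻¹ with hlam
  have hp : 2 ≤ Real.sqrt n1 := by
    rw [show (2 : ℝ) = Real.sqrt (2 ^ 2) by rw [Real.sqrt_sq (by norm_num)]]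
    exact Real.sqrt_le_sqrt (by norm_num; exact_mod_cast hn1)
  have ht : 1 ≤ Real.sqrt n2 := by
    rw [← Real.sqrt_one]
    exact Real.sqrt_le_sqrt (by exact_mod_cast hn2)
  set N := flat (Lh - L0) with hN
  set E := flat (Lh + Sh - (L0 + S0)) with hE
  have hneg : frob (L0 + S0 - (L0 + S0 + Z0)) = frob Z0 := by
    rw [show L0 + S0 - (L0 + S0 + Z0) = -Z0 by abel]
    simp [frob]
  have hopt := hmin.2 L0 S0 (by rw [hneg]; exact hZ)
  have hE2 : Real.sqrt (E ⬝ᵥ E) ≤ 2 * δ := by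
    have h1 := sqrt_dotProduct_add_le (flat (Lh + Sh - (L0 + S0 + Z0))) (flat Z0)
    rw [← frob_eq_sqrt, ← frob_eq_sqrt, show flat (Lh + Sh - (L0 + S0 + Z0)) + flat Z0 = E by
      funext e; simp only [hE, flat, Pi.add_apply, Matrix.sub_apply, Matrix.add_apply]; ring] at h1
    linarith [hmin.1]
  have hnuc := le_nuc_of_certificate hU hV σ hW0 hW Lh (N := N) (by
    funext e; simp only [hN, flat, Pi.add_apply, Matrix.sub_apply]; ring)
  have hnuc0 : nuc L0 ≤ ∑ k, σ k := nuc_le fun B hB => flat_svd_dotProduct_le hU hV hσ hB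
  have hgap : N ⬝ᵥ (flat (U * Vᵀ) + W) + 1 / 2 * Real.sqrt
      ((N - tangentProj U V *ᵥ N) ⬝ᵥ (N - tangentProj U V *ᵥ N))
      + lam * ∑ e, (|flat S0 e + (E e - N e)| - |flat S0 e|) ≤ 0 := by
    have h1 : ∀ e, flat S0 e + (E e - N e) = flat Sh e := fun e => by
      simp only [hE, hN, flat, Matrix.sub_apply, Matrix.add_apply]; ring
    simp only [h1]
    rw [Finset.sum_sub_distrib, ← l1norm_eq_sum, ← l1norm_eq_sum]
    linarith
  have hcard : (Fintype.card (Fin n1 × Fin n2) : ℝ) = Real.sqrt n1 ^ 2 * Real.sqrt n2 ^ 2 := by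
    rw [Real.sq_sqrt (by positivity), Real.sq_sqrt (by positivity)]; simp
  have hlam1 : lam * Real.sqrt n1 = 1 := inv_mul_cancel₀ (by linarith)
  have hfin := recovery_of_gap tangentProj_transpose hb hp ht hcard hδ hlam1 hε0 hε
    (Γ := flat (U * Vᵀ) + W) hΓ0 hΓ1 hS0 hS1 hE2 hgap
  rw [Real.sq_sqrt (by positivity), Real.sq_sqrt (by positivity), ← mul_assoc] at hfin
  have hEN : E - N = flat (Sh - S0) := by
    funext e; simp only [hE, hN, flat, Pi.sub_apply, Matrix.sub_apply, Matrix.add_apply]; ring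
  have hnn : ∀ v : Fin n1 × Fin n2 → ℝ, 0 ≤ v ⬝ᵥ v := fun v =>
    Finset.sum_nonneg fun e _ => mul_self_nonneg _
  rw [pairDist, frob_eq_sqrt, frob_eq_sqrt, Real.sq_sqrt (hnn _), Real.sq_sqrt (hnn _), ← hEN]
  refine (Real.sqrt_le_sqrt hfin).trans (le_of_eq ?_)
  rw [Real.sqrt_mul (by positivity), Real.sqrt_sq hδ]

end Recovery

section Transfer

/-- The mode of a binomial law with mean `m` has probability at least `1 / (N + 1)`. -/
theorem one_le_binomial_mode {N m : ℕ} (hm : m < N) :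
    1 ≤ (N + 1 : ℝ) * (N.choose m * (m / N : ℝ) ^ m * (1 - m / N : ℝ) ^ (N - m)) := by
  have hN : (0 : ℝ) < N := by exact_mod_cast (Nat.zero_le m).trans_lt hm
  set ρ : ℝ := m / N with hρ
  have hρ0 : 0 ≤ ρ := by positivity
  have hNρ : N * ρ = m := by rw [hρ]; field_simp
  have hρ1 : 0 < 1 - ρ := by
    have : (m : ℝ) < N := by exact_mod_cast hm
    rw [hρ, sub_pos, div_lt_one hN]; exact this
  set b : ℕ → ℝ := fun k => N.choose k * ρ ^ k * (1 - ρ) ^ (N - k) with hb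
  have hb0 : ∀ k, 0 ≤ b k := fun k => by positivity
  have hstep : ∀ k, k < N → b (k + 1) * ((k + 1) * (1 - ρ)) = b k * ((N - k) * ρ) := by
    intro k hk
    have h1 : (N.choose (k + 1) : ℝ) * (k + 1) = N.choose k * (N - k) := by
      have := Nat.choose_succ_right_eq N k
      rw [← Nat.cast_sub hk.le]
      exact_mod_cast this
    have h2 : N - k = (N - (k + 1)) + 1 := by omega
    simp only [hb]
    rw [h2, pow_succ ρ, pow_succ (1 - ρ)]
    linear_combination (ρ ^ k * ρ * (1 - ρ) ^ (N - (k + 1)) * (1 - ρ)) * h1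
  have hlow : ∀ j, j ≤ m → b (m - j) ≤ b m := by
    intro j
    induction j with
    | zero => intro _; simp
    | succ j ih =>
      intro hj
      refine le_trans ?_ (ih (by omega))
      obtain ⟨k, hk⟩ : ∃ k, m - (j + 1) = k := ⟨_, rfl⟩
      have hk1 : m - j = k + 1 := by omega
      rw [hk, hk1]
      have hkm : (k : ℝ) + 1 ≤ m := by exact_mod_cast (by omega : k + 1 ≤ m)
      have hpos : 0 < ((k : ℝ) + 1) * (1 - ρ) := by positivity
      refine le_of_mul_le_mul_right ?_ hpos
      rw [hstep k (by omega)]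
      exact mul_le_mul_of_nonneg_left (by nlinarith) (hb0 k)
  have hhigh : ∀ j, b (m + j) ≤ b m := by
    intro j
    induction j with
    | zero => simp
    | succ j ih =>
      refine le_trans ?_ ih
      rcases lt_or_ge (m + j) N with h | h
      · have hpos : 0 < (((m + j : ℕ) : ℝ) + 1) * (1 - ρ) := by positivity
        refine le_of_mul_le_mul_right ?_ hpos
        rw [← add_assoc, hstep (m + j) h]
        refine mul_le_mul_of_nonneg_left ?_ (hb0 _)
        push_cast
        nlinarith [(Nat.cast_nonneg j : (0 : ℝ) ≤ j)]
      · have : N.choose (m + (j + 1)) = 0 := Nat.choose_eq_zero_of_lt (by omega)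
        refine le_trans (le_of_eq ?_) (hb0 _)
        simp [hb, this]
  have hmode : ∀ k, b k ≤ b m := by
    intro k
    rcases le_total k m with h | h
    · have := hlow (m - k) (by omega)
      rwa [Nat.sub_sub_self h] at this
    · have := hhigh (k - m)
      rwa [Nat.add_sub_cancel' h] at this
  have hsum : ∑ k ∈ Finset.range (N + 1), b k = 1 := by
    have := add_pow ρ (1 - ρ) N
    rw [add_sub_cancel, one_pow] at this
    rw [this]
    exact Finset.sum_congr rfl fun k _ => by simp only [hb]; ring
  calc (1 : ℝ) = ∑ k ∈ Finset.range (N + 1), b k := hsum.symm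
    _ ≤ ∑ k ∈ Finset.range (N + 1), b m := Finset.sum_le_sum fun k _ => hmode k
    _ = _ := by simp [hb]

theorem bernW_indicator {ι : Type*} [Fintype ι] [DecidableEq ι] (p : ℝ) (A : Finset ι) :
    bernW p (fun e => decide (e ∈ A)) = p ^ A.card * (1 - p) ^ (Fintype.card ι - A.card) := by
  simp only [bernW, bw, decide_eq_true_eq]
  rw [Finset.prod_ite, Finset.prod_const, Finset.prod_const, Finset.filter_mem_eq_inter,
    Finset.univ_inter, Finset.filter_not, Finset.filter_mem_eq_inter, Finset.univ_inter,
    ← Finset.compl_eq_univ_sdiff, Finset.card_compl]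

theorem bernW_half {ι : Type*} [Fintype ι] (s : ι → Bool) :
    bernW (1 / 2) s = (1 / 2) ^ Fintype.card ι := by
  rw [bernW, Finset.prod_congr rfl (g := fun _ => (1 / 2 : ℝ)) fun e _ => by
    unfold bw; split_ifs <;> norm_num]
  simp

/-- Events of the uniform support model are controlled by the Bernoulli model. -/
theorem unifProb_ge_bernoulli {n1 n2 m : ℕ} (hm : m < n1 * n2)
    (Q : (Fin n1 × Fin n2 → Bool) → (Fin n1 × Fin n2 → Bool) → Prop) :
    1 - (n1 * n2 + 1 : ℝ) * wP (fun x : (Fin n1 × Fin n2 → Bool) × (Fin n1 × Fin n2 → Bool) =>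
        bernW (m / (n1 * n2 : ℝ)) x.1 * bernW (1 / 2) x.2) (fun x => ¬ Q x.1 x.2)
      ≤ unifProb (fun ω : SampleSpace n1 n2 m => Q (fun e => decide (e ∈ ω.1.1)) ω.2) := by
  classical
  set N := n1 * n2 with hN
  have hcι : Fintype.card (Fin n1 × Fin n2) = N := by simp [hN]
  have hNR : (n1 * n2 : ℝ) = N := by rw [hN]; push_cast; rfl
  rw [hNR]
  set ρ : ℝ := m / N with hρ
  have hN0 : (0 : ℝ) < N := by exact_mod_cast (Nat.zero_le m).trans_lt hm
  have hρ0 : 0 ≤ ρ := by positivity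
  have hρ1 : ρ ≤ 1 := by
    rw [hρ, div_le_one hN0]; exact_mod_cast hm.le
  set E : SampleSpace n1 n2 m → Prop := fun ω => Q (fun e => decide (e ∈ ω.1.1)) ω.2 with hE
  have hcard : (Fintype.card (SampleSpace n1 n2 m) : ℝ) = N.choose m * 2 ^ N := by
    have : Fintype.card (SampleSpace n1 n2 m) = N.choose m * 2 ^ N := by
      rw [Fintype.card_prod, Fintype.card_finset_len, Fintype.card_fun, Fintype.card_bool, hcι]
    rw [this]; push_cast; rfl
  have hch : (0 : ℝ) < N.choose m := by exact_mod_cast Nat.choose_pos hm.le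
  have hcpos : (0 : ℝ) < N.choose m * 2 ^ N := by positivity
  set bad := Finset.univ.filter fun ω : SampleSpace n1 n2 m => ¬ E ω with hbad
  have hsplit : ((Finset.univ.filter E).card : ℝ) + bad.card = N.choose m * 2 ^ N := by
    rw [← hcard, ← Finset.card_univ, ← Finset.card_filter_add_card_filter_not (s := Finset.univ) E]
    push_cast; rfl
  set w : ℝ := ρ ^ m * (1 - ρ) ^ (N - m) * (1 / 2) ^ N with hw
  have hle : bad.card * w ≤ wP (fun x : (Fin n1 × Fin n2 → Bool) × (Fin n1 × Fin n2 → Bool) =>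
      bernW ρ x.1 * bernW (1 / 2) x.2) (fun x => ¬ Q x.1 x.2) := by
    set φ : SampleSpace n1 n2 m → (Fin n1 × Fin n2 → Bool) × (Fin n1 × Fin n2 → Bool) :=
      fun ω => (fun e => decide (e ∈ ω.1.1), ω.2) with hφ
    have hinj : Function.Injective φ := by
      rintro ⟨⟨A, hA⟩, s⟩ ⟨⟨B, hB⟩, t⟩ h
      simp only [hφ, Prod.mk.injEq] at h
      obtain ⟨h1, rfl⟩ := h
      have : A = B := by
        ext e
        simpa using congrFun h1 e
      subst this
      rfl
    have hφw : ∀ ω, bernW ρ (φ ω).1 * bernW (1 / 2) (φ ω).2 = w := fun ω => by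
      rw [hφ, hw]
      simp only
      rw [bernW_indicator, bernW_half, ω.1.2, hcι]
    calc bad.card * w = ∑ ω ∈ bad, bernW ρ (φ ω).1 * bernW (1 / 2) (φ ω).2 := by
          rw [Finset.sum_congr rfl fun ω _ => hφw ω, Finset.sum_const, nsmul_eq_mul]
      _ = ∑ x ∈ bad.map ⟨φ, hinj⟩, bernW ρ x.1 * bernW (1 / 2) x.2 := by
          rw [Finset.sum_map]; rfl
      _ ≤ ∑ x ∈ Finset.univ.filter
            (fun x : (Fin n1 × Fin n2 → Bool) × (Fin n1 × Fin n2 → Bool) => ¬ Q x.1 x.2),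
            bernW ρ x.1 * bernW (1 / 2) x.2 := by
          refine Finset.sum_le_sum_of_subset_of_nonneg ?_ fun x _ _ =>
            mul_nonneg (bernW_nonneg hρ0 hρ1 _) (bernW_nonneg (by norm_num) (by norm_num) _)
          intro x hx
          obtain ⟨ω, hω, rfl⟩ := Finset.mem_map.mp hx
          exact Finset.mem_filter.mpr ⟨Finset.mem_univ _, (Finset.mem_filter.mp hω).2⟩
      _ = _ := by
          rw [wP, Finset.sum_filter]
          exact Finset.sum_congr rfl fun x _ => by congr
  have hmode := one_le_binomial_mode hm
  have hbadle : (bad.card : ℝ) ≤ N.choose m * 2 ^ N * ((N + 1) * (bad.card * w)) := by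
    have h2 : (2 : ℝ) ^ N * (1 / 2) ^ N = 1 := by rw [← mul_pow]; norm_num
    calc (bad.card : ℝ) = bad.card * 1 := (mul_one _).symm
      _ ≤ bad.card * ((N + 1 : ℝ) * (N.choose m * ρ ^ m * (1 - ρ) ^ (N - m))) := by gcongr
      _ = bad.card * ((N + 1 : ℝ) * (N.choose m * ρ ^ m * (1 - ρ) ^ (N - m)))
          * (2 ^ N * (1 / 2) ^ N) := by rw [h2, mul_one]
      _ = _ := by rw [hw]; ring
  have hU : unifProb E = ((Finset.univ.filter E).card : ℝ) / (N.choose m * 2 ^ N) := by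
    rw [unifProb, hcard]
  rw [hU, le_div_iff₀ hcpos]
  have h3 : bad.card ≤ (N.choose m * 2 ^ N : ℝ) * ((N + 1) *
      wP (fun x : (Fin n1 × Fin n2 → Bool) × (Fin n1 × Fin n2 → Bool) =>
      bernW ρ x.1 * bernW (1 / 2) x.2) (fun x => ¬ Q x.1 x.2)) := hbadle.trans (by gcongr)
  linarith

end Transfer

section Assembly

theorem wP_prod_fst {α β : Type*} [Fintype α] [Fintype β] (w : α → ℝ) {v : β → ℝ}
    (hv : ∑ b, v b = 1) (E : α → Prop) :
    wP (fun x : α × β => w x.1 * v x.2) (fun x => E x.1) = wP w E := by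
  classical
  rw [wP_prod]
  unfold wP
  refine Finset.sum_congr rfl fun a _ => ?_
  by_cases h : E a <;> simp [h, hv]

theorem wP_prod_le {α β : Type*} [Fintype α] [Fintype β] {w : α → ℝ} {v : β → ℝ}
    (hw : ∀ a, 0 ≤ w a) (hw1 : ∑ a, w a = 1) {E : α × β → Prop} {B : ℝ}
    (h : ∀ a, wP v (fun b => E (a, b)) ≤ B) :
    wP (fun x : α × β => w x.1 * v x.2) E ≤ B := by
  rw [wP_prod]
  calc ∑ a, w a * wP v (fun b => E (a, b)) ≤ ∑ a, w a * B :=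
        Finset.sum_le_sum fun a _ => mul_le_mul_of_nonneg_left (h a) (hw a)
    _ = B := by rw [← Finset.sum_mul, hw1, one_mul]

variable {n1 n2 r : ℕ}

/-- The support-and-sign pattern `(b, s)` has an approximate dual certificate. -/
def HasCertificate (U : Matrix (Fin n1) (Fin r) ℝ) (V : Matrix (Fin n2) (Fin r) ℝ) (ε : ℝ)
    (b s : Fin n1 × Fin n2 → Bool) : Prop :=
  (∀ x, x ⬝ᵥ ((tangentProj U V * maskM b * tangentProj U V) *ᵥ x) ≤ 1 / 4 * (x ⬝ᵥ x)) ∧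
    ∃ W : Fin n1 × Fin n2 → ℝ, tangentProj U V *ᵥ W = 0 ∧ SpecLe (1 / 2) W ∧
      (∀ e, b e = false → |flat (U * Vᵀ) e + W e| ≤ (Real.sqrt n1)⁻¹ / 2) ∧
      ∀ e, b e = true → |flat (U * Vᵀ) e + W e - (Real.sqrt n1)⁻¹ * boolSign (s e)| ≤ ε

theorem wP_not_hasCertificate_le {U : Matrix (Fin n1) (Fin r) ℝ} {V : Matrix (Fin n2) (Fin r) ℝ}
    (hn2 : 0 < n2) (hn : n2 ≤ n1) (hU : Uᵀ * U = 1) (hV : Vᵀ * V = 1) {μ ρ q p z : ℝ} {K : ℕ}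
    (hμ : ∀ e, tangentProj U V e e ≤ μ) (hμ0 : 0 < μ) (hμ1 : μ ≤ 1) (hq0 : 0 < q) (hq1 : q ≤ 1)
    (hp0 : 0 ≤ p) (hp1 : p ≤ 1) (hK : 0 < K) (hρ : ρ = p * (1 - q) ^ K) (h0 : 0 ≤ ρ) (h1 : ρ ≤ 1)
    (hρe : ρ ≤ 2 * (1 / 53248) * Real.exp (-(1 / (2 * (1 / 53248) ^ 2))))
    (hz : 0 < z) (hZ : ∀ e, |flat (U * Vᵀ) e| ≤ z) (hzq : 58 * (z / q) * Real.sqrt n1 ≤ 1 / 4)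
    (hzK : z / 2 ^ K ≤ (Real.sqrt n1)⁻¹ / 8) :
    wP (fun x : (Fin n1 × Fin n2 → Bool) × (Fin n1 × Fin n2 → Bool) =>
        bernW ρ x.1 * bernW (1 / 2) x.2) (fun x => ¬ HasCertificate U V (z / 2 ^ K) x.1 x.2)
      ≤ K * ((4 * ρ + (K + 1) * μ) / (1 / 160000)) ^ K * (n1 * n2)
        + (K * (n1 * n2 * (2 * Real.exp (-(q / (16 * μ)))) + Real.exp (-n1))
        + (Real.exp (-n1)
        + (Real.exp (-n1) + n1 * n2 * (2 * Real.exp (-(1 / (128 * μ))))))) := by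
  set G := tangentProj U V with hG
  have hGT : Gᵀ = G := tangentProj_transpose
  have hG2 : G * G = G := tangentProj_mul_self hU hV
  have hperp := SpecLe.sub_tangentProj hU hV
  have hn1 : 0 < n1 := hn2.trans_le hn
  have hs : 0 < Real.sqrt n1 := Real.sqrt_pos.mpr (by exact_mod_cast hn1)
  have hhalf : ∀ s : Fin n1 × Fin n2 → Bool, 0 ≤ bernW (1 / 2) s :=
    bernW_nonneg (by norm_num) (by norm_num)
  have hw : ∀ x : (Fin n1 × Fin n2 → Bool) × (Fin n1 × Fin n2 → Bool),
      0 ≤ bernW ρ x.1 * bernW (1 / 2) x.2 := fun x =>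
    mul_nonneg (bernW_nonneg h0 h1 _) (hhalf _)
  let quad : (Fin n1 × Fin n2 → Bool) → Prop := fun b =>
    ∀ x : Fin n1 × Fin n2 → ℝ, x ⬝ᵥ ((G * maskM b * G) *ᵥ x) ≤ 1 / 160000 * (x ⬝ᵥ x)
  let golf : (Fin n1 × Fin n2 → Bool) → Prop := fun b => ∃ Y : Fin n1 × Fin n2 → ℝ,
    (∀ e, b e = true → Y e = 0) ∧ (∀ e, |Y e| ≤ 2 * (z / q)) ∧
    SpecLe (58 * (z / q) * Real.sqrt n1) (Y - G *ᵥ Y) ∧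
    ∀ e, |flat (U * Vᵀ) e - (G *ᵥ Y) e| ≤ z / 2 ^ K
  let sgn : (Fin n1 × Fin n2 → Bool) → (Fin n1 × Fin n2 → Bool) → Prop := fun b s =>
    ∃ H : Fin n1 × Fin n2 → ℝ, (∀ e, b e = false → H e = 0) ∧
      (∀ e, b e = true → H e - (G *ᵥ H) e = boolSign (s e)) ∧
      SpecLe (1 / 8 * Real.sqrt n1) (H - signVec b s) ∧ ∀ e, |(G *ᵥ H) e| ≤ 1 / 4
  have himp : ∀ x : (Fin n1 × Fin n2 → Bool) × (Fin n1 × Fin n2 → Bool),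
      ¬ HasCertificate U V (z / 2 ^ K) x.1 x.2 → ¬ quad x.1 ∨ ¬ golf x.1 ∨
        ¬ SpecLe (1 / 8 * Real.sqrt n1) (signVec x.1 x.2) ∨ (quad x.1 ∧ ¬ sgn x.1 x.2) := by
    rintro ⟨b, s⟩ hnot
    by_contra hcon
    push Not at hcon
    obtain ⟨hq, ⟨Y, hY0, hYa, hYs, hYZ⟩, hE, hsgn⟩ := hcon
    obtain ⟨H, hH0, hH, hHs, hGH⟩ := hsgn hq
    refine hnot ⟨fun x => (hq x).trans ?_, ?_⟩
    · exact mul_le_mul_of_nonneg_right (by norm_num)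
        (Finset.sum_nonneg fun e _ => mul_self_nonneg _)
    · refine exists_dual_certificate hG2 hperp (inv_pos.mpr hs) (inv_mul_cancel₀ hs.ne') ?_ hzK
        hY0 hYa (hYs.mono hzq) hYZ hH0 hH hHs hE hGH
      rw [inv_eq_one_div, div_div, le_div_iff₀ (by positivity)]
      linarith
  refine (wP_mono hw himp).trans ?_
  refine (wP_or hw _ _).trans (add_le_add ?_ ?_)
  · rw [wP_prod_fst (bernW ρ) (bernW_sum _) fun b => ¬ quad b]
    have := wP_compression_quadratic_le hGT hG2 hμ hμ0.le hμ1 h0 h1 hK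
      (c := 1 / 160000) (by norm_num)
    rw [Fintype.card_prod, Fintype.card_fin, Fintype.card_fin, Nat.cast_mul] at this
    exact this
  refine (wP_or hw _ _).trans (add_le_add ?_ ?_)
  · rw [wP_prod_fst (bernW ρ) (bernW_sum _) fun b => ¬ golf b, hρ]
    exact wP_golfing_le hn2 hn hGT hG2 hμ hμ0 hq0 hq1 hperp hp0 hp1 K (flat (U * Vᵀ)) z hz
      (tangentProj_mulVec_factor hU) hZ
  refine (wP_or hw _ _).trans (add_le_add ?_ ?_)
  · exact wP_signVec_spectral_le hn2 hn (by norm_num) h0 hρe h1 (by norm_num) (by norm_num)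
  · refine wP_prod_le (bernW_nonneg h0 h1) (bernW_sum _) fun b => ?_
    by_cases hb : quad b
    · exact (wP_mono hhalf fun s hs => hs.2).trans
        (wP_sign_certificate_le hn2 hn hGT hG2 hμ hμ0 b hb)
    · refine le_trans (le_of_eq ?_) (by positivity : (0 : ℝ) ≤ _)
      simp [wP, hb]

/-- Numerical bound on the total failure probability. -/
theorem failure_numeric_le {n N K ρ μ q C : ℝ} {k : ℕ} (hn : 1 ≤ n)
    (hN0 : 0 ≤ N) (hN : N ≤ n ^ 2) (hK0 : 0 ≤ K) (hK : K ≤ 21 * n) (hC : 1 ≤ C)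
    (h1 : ((4 * ρ + (K + 1) * μ) / (1 / 160000)) ^ k ≤ (n ^ 20)⁻¹)
    (h2 : Real.exp (-(q / (16 * μ))) ≤ (n ^ 20)⁻¹)
    (h3 : Real.exp (-(1 / (128 * μ))) ≤ (n ^ 20)⁻¹) (h4 : Real.exp (-n) ≤ C * (n ^ 20)⁻¹) :
    (N + 1) * (K * ((4 * ρ + (K + 1) * μ) / (1 / 160000)) ^ k * N
        + (K * (N * (2 * Real.exp (-(q / (16 * μ)))) + Real.exp (-n))
        + (Real.exp (-n) + (Real.exp (-n) + N * (2 * Real.exp (-(1 / (128 * μ)))))))) ≤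
      176 * C * (n ^ 10)⁻¹ := by
  set y := (n ^ 20)⁻¹ with hy
  have hn0 : 0 < n := by linarith
  have hy0 : 0 < y := by positivity
  have hn2 : 1 ≤ n ^ 2 := one_le_pow₀ hn
  have hn23 : n ^ 2 ≤ n ^ 3 := pow_le_pow_right₀ hn (by norm_num)
  have hn3 : 1 ≤ n ^ 3 := one_le_pow₀ hn
  have hn13 : n ≤ n ^ 3 := le_self_pow₀ hn (by norm_num)
  have hCy : y ≤ C * y := le_mul_of_one_le_left hy0.le hC
  have hin : K * ((4 * ρ + (K + 1) * μ) / (1 / 160000)) ^ k * N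
        + (K * (N * (2 * Real.exp (-(q / (16 * μ)))) + Real.exp (-n))
        + (Real.exp (-n) + (Real.exp (-n) + N * (2 * Real.exp (-(1 / (128 * μ)))))))
      ≤ 88 * (n ^ 3 * (C * y)) := by
    calc _ ≤ 21 * n * y * n ^ 2 + (21 * n * (n ^ 2 * (2 * y) + C * y)
          + (C * y + (C * y + n ^ 2 * (2 * y)))) := by
          refine add_le_add ?_ (add_le_add ?_ (add_le_add h4 (add_le_add h4 ?_)))
          · calc _ ≤ K * y * N := by gcongr
              _ ≤ _ := by gcongr
          · gcongr
          · gcongr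
      _ = 63 * (n ^ 3 * y) + 21 * (n * (C * y)) + 2 * (C * y) + 2 * (n ^ 2 * y) := by ring
      _ ≤ 63 * (n ^ 3 * (C * y)) + 21 * (n ^ 3 * (C * y)) + 2 * (n ^ 3 * (C * y))
          + 2 * (n ^ 3 * (C * y)) := by
          have h5 : C * y ≤ n ^ 3 * (C * y) := le_mul_of_one_le_left (by positivity) hn3
          gcongr
      _ = _ := by ring
  calc _ ≤ (N + 1) * (88 * (n ^ 3 * (C * y))) := by gcongr
    _ ≤ (2 * n ^ 2) * (88 * (n ^ 3 * (C * y))) := by gcongr; linarith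
    _ = 176 * C * (n ^ 5 * y) := by ring
    _ ≤ 176 * C * (n ^ 10)⁻¹ := by
        gcongr
        rw [hy, ← div_eq_mul_inv, div_le_iff₀ (by positivity), inv_mul_eq_div,
          le_div_iff₀ (by positivity), ← pow_add]
        exact pow_le_pow_right₀ hn (by norm_num)

end Assembly

section Main

variable {n1 n2 r : ℕ}

theorem sparseOf_recovery_of_hasCertificate {U : Matrix (Fin n1) (Fin r) ℝ}
    {V : Matrix (Fin n2) (Fin r) ℝ} (hn2 : 0 < n2) (hn1 : 4 ≤ n1) (hU : Uᵀ * U = 1)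
    (hV : Vᵀ * V = 1) {σ : Fin r → ℝ} (hσ : ∀ k, 0 < σ k) {a : Fin n1 × Fin n2 → ℝ}
    (ha : ∀ e, 0 < a e) {ε : ℝ} (hε0 : 0 ≤ ε)
    (hε : ε * (Real.sqrt n1 * Real.sqrt n2) ≤ (Real.sqrt n1)⁻¹ / 8) {m : ℕ}
    (ω : SampleSpace n1 n2 m) (h : HasCertificate U V ε (fun e => decide (e ∈ ω.1.1)) ω.2)
    (δ : ℝ) (Z0 : Matrix (Fin n1) (Fin n2) ℝ) (hδ : 0 ≤ δ) (hZ : frob Z0 ≤ δ)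
    (Lh Sh : Matrix (Fin n1) (Fin n2) ℝ)
    (hmin : IsStablePCPMin (U * diagonal σ * Vᵀ + sparseOf a ω + Z0) (Real.sqrt n1)⁻¹ δ Lh Sh) :
    pairDist Lh Sh (U * diagonal σ * Vᵀ) (sparseOf a ω)
      ≤ Real.sqrt (320 * (n1 : ℝ) * n2 + 4) * δ := by
  obtain ⟨hb, W, hW0, hW, hΓ0, hΓ1⟩ := h
  refine pairDist_le_of_certificate hn2 hn1 hU hV hσ hb (fun e he => ?_) (fun e he => ?_)
    hW0 hW hε0 hε hΓ0 hΓ1 hδ hZ hmin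
  · rw [decide_eq_false_iff_not] at he
    simp [flat, sparseOf, he]
  · rw [decide_eq_true_eq] at he
    have hae := ha e
    cases hs : ω.2 e <;> simp [flat, sparseOf, he, hs, boolSign, abs_of_pos hae]

theorem exists_nat_between {x : ℝ} (hx : 1 ≤ x) : ∃ K : ℕ, 20 * x ≤ K ∧ (K : ℝ) ≤ 21 * x :=
  ⟨⌈20 * x⌉₊, Nat.le_ceil _, by linarith [Nat.ceil_lt_add_one (by linarith : 0 ≤ 20 * x)]⟩

theorem exp_le_inv_pow {n x : ℝ} (hn : 0 < n) (hx : 20 * Real.log n ≤ x) :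
    Real.exp (-x) ≤ (n ^ 20)⁻¹ := by
  rw [Real.exp_neg]
  refine inv_anti₀ (by positivity) ?_
  calc n ^ 20 = Real.exp (20 * Real.log n) := by
        rw [mul_comm, Real.exp_mul, Real.exp_log hn]; norm_cast
    _ ≤ _ := Real.exp_le_exp.mpr hx

/-- Failure probability of the Bernoulli model in the admissible rank and sparsity range. -/
theorem bernoulli_failure_le {U : Matrix (Fin n1) (Fin r) ℝ} {V : Matrix (Fin n2) (Fin r) ℝ}
    (hn2 : 0 < n2) (hn : n2 ≤ n1) (hn1 : 4 ≤ n1) (hU : Uᵀ * U = 1) (hV : Vᵀ * V = 1) {ρ s : ℝ}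
    (hs : s = 1 / 10000 / Real.log n1) (hUr : ∀ i, ∑ k, U i k ^ 2 ≤ s ^ 2)
    (hVr : ∀ j, ∑ k, V j k ^ 2 ≤ s ^ 2)
    (hUV : ∀ e, |flat (U * Vᵀ) e| ≤ s * (Real.sqrt n1)⁻¹) (h0 : 0 ≤ ρ) (h1 : ρ ≤ 1 / 10 ^ 7)
    (hρe : ρ ≤ 2 * (1 / 53248) * Real.exp (-(1 / (2 * (1 / 53248) ^ 2)))) :
    ∃ ε : ℝ, 0 ≤ ε ∧ ε * (Real.sqrt n1 * Real.sqrt n2) ≤ (Real.sqrt n1)⁻¹ / 8 ∧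
      (n1 * n2 + 1 : ℝ) * wP (fun x : (Fin n1 × Fin n2 → Bool) × (Fin n1 × Fin n2 → Bool) =>
        bernW ρ x.1 * bernW (1 / 2) x.2) (fun x => ¬ HasCertificate U V ε x.1 x.2)
      ≤ 176 * (Nat.factorial 20 : ℝ) * ((n1 : ℝ) ^ 10)⁻¹ := by
  set l := Real.log n1 with hl
  have hn4 : (4 : ℝ) ≤ n1 := by exact_mod_cast hn1
  have hn0 : (0 : ℝ) < n1 := by linarith
  have hl1 : 1 ≤ l := by
    rw [hl, Real.le_log_iff_exp_le hn0]
    linarith [Real.exp_one_lt_d9]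
  have hl0 : 0 < l := by linarith
  have hln : l ≤ n1 := by
    have := Real.log_le_sub_one_of_pos hn0
    linarith
  have hs0 : 0 < s := by rw [hs]; positivity
  have hsl : s * l = 1 / 10000 := by rw [hs]; field_simp
  have hs1 : s ≤ 1 / 10000 := by nlinarith
  set t := Real.sqrt n1 with ht
  have ht2 : t * t = n1 := Real.mul_self_sqrt hn0.le
  have ht0 : 0 < t := Real.sqrt_pos.mpr hn0
  have htn2 : Real.sqrt n2 ≤ t := Real.sqrt_le_sqrt (by exact_mod_cast hn)
  obtain ⟨K, hK20, hK21⟩ := exists_nat_between hl1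
  have hKR : (0 : ℝ) < K := by linarith
  have hK : 0 < K := by exact_mod_cast hKR
  have h2K : (n1 : ℝ) ≤ 2 ^ K := by
    have h4 : Real.exp (1 / 2) ≤ 2 := by
      have h5 : Real.exp (1 / 2) ^ 2 ≤ 2 ^ 2 := by
        rw [← Real.exp_nat_mul]
        norm_num
        linarith [Real.exp_one_lt_d9]
      exact (sq_le_sq₀ (Real.exp_pos _).le (by norm_num)).mp h5
    calc (n1 : ℝ) = Real.exp l := (Real.exp_log hn0).symm
      _ ≤ Real.exp (K * (1 / 2)) := Real.exp_le_exp.mpr (by linarith)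
      _ = Real.exp (1 / 2) ^ K := Real.exp_nat_mul _ _
      _ ≤ _ := by gcongr
  have h2K0 : (0 : ℝ) < 2 ^ K := by positivity
  set z := s * t⁻¹ with hz
  have hz0 : 0 < z := by positivity
  have hzt : z * t = s := by rw [hz]; field_simp
  set q : ℝ := 1 / (2 * K) with hq
  have hK2 : (1 : ℝ) ≤ 2 * K := by linarith
  have hq0 : 0 < q := by positivity
  have hq1 : q ≤ 1 := by rw [hq, div_le_one (by positivity)]; exact hK2
  have hqK : K * q = 1 / 2 := by rw [hq]; field_simp
  have hqp : 1 / 2 ≤ (1 - q) ^ K := by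
    have := one_add_mul_le_pow (a := -q) (by linarith) K
    rw [← sub_eq_add_neg] at this
    linarith
  have hzq : 58 * (z / q) * t ≤ 1 / 4 := by
    have : 58 * (z / q) * t = 58 * (2 * K) * (z * t) := by rw [hq]; field_simp
    rw [this, hzt]
    linarith only [mul_le_mul_of_nonneg_right hK21 hs0.le, hsl]
  have hε : z / 2 ^ K * (t * Real.sqrt n2) ≤ t⁻¹ / 8 := by
    calc z / 2 ^ K * (t * Real.sqrt n2) ≤ z / 2 ^ K * (t * t) := by gcongr
      _ = z * (n1 / 2 ^ K) := by rw [ht2]; ring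
      _ ≤ z * 1 := by
          gcongr
          exact (div_le_one h2K0).mpr h2K
      _ = s * t⁻¹ := by rw [hz, mul_one]
      _ ≤ 1 / 8 * t⁻¹ := by gcongr; linarith
      _ = t⁻¹ / 8 := by ring
  have hzK : z / 2 ^ K ≤ t⁻¹ / 8 := by
    have h5 : (1 : ℝ) ≤ t * Real.sqrt n2 := by
      have h6 : 1 ≤ Real.sqrt n2 := Real.one_le_sqrt.mpr (by exact_mod_cast hn2)
      nlinarith
    exact le_trans (le_mul_of_one_le_right (by positivity) h5) hε
  set μ := 2 * s ^ 2 with hμ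
  have hμ0 : 0 < μ := by positivity
  have hμl : μ * l ≤ 2 / 10 ^ 8 := by
    have : μ * l = 2 * s * (s * l) := by rw [hμ]; ring
    rw [this, hsl]
    linarith
  have hμK : K * μ ≤ 21 * (2 / 10 ^ 8) := by
    linarith only [mul_le_mul_of_nonneg_right hK21 hμ0.le, hμl]
  have hμ1 : μ ≤ 2 / 10 ^ 8 := (le_mul_of_one_le_right hμ0.le hl1).trans hμl
  set p := ρ / (1 - q) ^ K with hp
  have hqp0 : 0 < (1 - q) ^ K := by linarith
  have hρp : ρ = p * (1 - q) ^ K := by rw [hp]; field_simp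
  have hp1 : p ≤ 1 := by
    rw [hp, div_le_one hqp0]
    linarith
  refine ⟨z / 2 ^ K, by positivity, hε, ?_⟩
  have hprob := wP_not_hasCertificate_le hn2 hn hU hV (tangentProj_diag_le hUr hVr) hμ0
    (by linarith) hq0 hq1 (by positivity) hp1 hK hρp h0 (by linarith) hρe hz0 hUV hzq hzK
  refine (mul_le_mul_of_nonneg_left hprob (by positivity)).trans ?_
  have hexp : ∀ x : ℝ, 20 * l ≤ x → Real.exp (-x) ≤ ((n1 : ℝ) ^ 20)⁻¹ := fun x hx =>
    exp_le_inv_pow hn0 hx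
  refine failure_numeric_le (N := n1 * n2) (by linarith) (by positivity) ?_ (by positivity)
    (by linarith) (by exact_mod_cast Nat.factorial_pos 20) ?_ (hexp _ ?_) (hexp _ ?_) ?_
  · rw [sq]
    gcongr
  · calc ((4 * ρ + (K + 1) * μ) / (1 / 160000)) ^ K ≤ (Real.exp (-1)) ^ K := by
          gcongr
          have h6 : 1 / 3 ≤ Real.exp (-1) := by
            rw [Real.exp_neg, one_div]
            exact inv_anti₀ (Real.exp_pos _) (by linarith [Real.exp_one_lt_d9])
          linarith
      _ = Real.exp (-K) := by rw [← Real.exp_nat_mul]; congr 1; ring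
      _ ≤ _ := hexp _ hK20
  · rw [le_div_iff₀ (by positivity)]
    refine le_of_mul_le_mul_left ?_ hKR
    rw [hqK]
    have hKs : K * s ≤ 21 / 10000 := by
      linarith only [mul_le_mul_of_nonneg_right hK21 hs0.le, hsl]
    calc K * (20 * l * (16 * μ)) = 640 * (K * s * (s * l)) := by rw [hμ]; ring
      _ ≤ 640 * (21 / 10000 * (1 / 10000)) := by rw [hsl]; gcongr
      _ ≤ 1 / 2 := by norm_num
  · rw [le_div_iff₀ (by positivity)]
    linarith only [hμl]
  · rw [Real.exp_neg, ← div_eq_mul_inv, inv_eq_one_div,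
      div_le_div_iff₀ (Real.exp_pos _) (by positivity), one_mul]
    have := Real.pow_div_factorial_le_exp (n1 : ℝ) hn0.le 20
    rw [div_le_iff₀ (by positivity)] at this
    linarith only [this]

end Main

/-- StablePCP_c(δ) with λ = 1/√n1 recovers (L0, S0) with error
√(320·n1·n2 + 4)·δ for every δ ≥ 0 and every noise Z0 with ‖Z0‖_F ≤ δ,
with probability ≥ 1 − c′·n1⁻¹⁰ over the random support and signs. -/
theorem stablePCP_recovery :
    ∃ ρr' ρs' c' : ℝ, 0 < ρr' ∧ 0 < ρs' ∧ 0 < c' ∧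
      ∀ (n1 n2 r m : ℕ) (ν : ℝ), 0 < n2 → n2 ≤ n1 → 0 < ν →
        ∀ (U : Matrix (Fin n1) (Fin r) ℝ) (V : Matrix (Fin n2) (Fin r) ℝ)
          (σ : Fin r → ℝ) (a : Fin n1 × Fin n2 → ℝ),
          Uᵀ * U = 1 → Vᵀ * V = 1 → (∀ k, 0 < σ k) → (∀ p, 0 < a p) →
          (∀ i : Fin n1, (∑ k, U i k ^ 2) ≤ ν * r / n1) →
          (∀ j : Fin n2, (∑ k, V j k ^ 2) ≤ ν * r / n2) →
          (∀ i j, |∑ k, U i k * V j k| ≤ Real.sqrt (ν * r / (n1 * n2))) →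
          (r : ℝ) ≤ ρr' * n2 * ν⁻¹ * ((Real.log n1) ^ 2)⁻¹ →
          (m : ℝ) ≤ ρs' * n1 * n2 →
          1 - c' * ((n1 : ℝ) ^ 10)⁻¹ ≤
            unifProb (fun ω : SampleSpace n1 n2 m =>
              ∀ (δ : ℝ) (Z0 : Matrix (Fin n1) (Fin n2) ℝ), 0 ≤ δ → frob Z0 ≤ δ →
                ∀ Lh Sh : Matrix (Fin n1) (Fin n2) ℝ,
                  IsStablePCPMin (U * Matrix.diagonal σ * Vᵀ + sparseOf a ω + Z0)
                      (Real.sqrt n1)⁻¹ δ Lh Sh →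
                    pairDist Lh Sh (U * Matrix.diagonal σ * Vᵀ) (sparseOf a ω) ≤
                      Real.sqrt (320 * (n1 : ℝ) * n2 + 4) * δ) := by
  refine ⟨(1 / 10000) ^ 2, min (1 / 10 ^ 7)
    (2 * (1 / 53248) * Real.exp (-(1 / (2 * (1 / 53248) ^ 2)))), 176 * (Nat.factorial 20 : ℝ),
    by positivity, by positivity, by positivity, ?_⟩
  intro n1 n2 r m ν hn2 hn hν U V σ a hU hV hσ ha hUr hVr hUV hr hm
  have hn1 : 0 < n1 := hn2.trans_le hn
  have hn1R : (0 : ℝ) < n1 := by exact_mod_cast hn1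
  have hn2R : (0 : ℝ) < n2 := by exact_mod_cast hn2
  have hnR : (n2 : ℝ) ≤ n1 := by exact_mod_cast hn
  rcases lt_or_ge n1 4 with hsmall | hlarge
  · refine le_trans ?_ (div_nonneg (Nat.cast_nonneg _) (Nat.cast_nonneg _))
    have h4 : (n1 : ℝ) ≤ 4 := by exact_mod_cast hsmall.le
    rw [sub_nonpos, ← div_eq_mul_inv, one_le_div (by positivity)]
    calc (n1 : ℝ) ^ 10 ≤ 4 ^ 10 := by gcongr
      _ ≤ _ := by norm_num [Nat.factorial]
  have hl0 : 0 < Real.log n1 := Real.log_pos (by exact_mod_cast (by omega : 1 < n1))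
  obtain ⟨s, hs⟩ : ∃ s, s = 1 / 10000 / Real.log n1 := ⟨_, rfl⟩
  have hs0 : 0 < s := by rw [hs]; positivity
  have hνr : ν * r ≤ s ^ 2 * n2 := by
    refine (mul_le_mul_of_nonneg_left hr hν.le).trans (le_of_eq ?_)
    rw [hs]
    field_simp
  have hνr2 : ν * r / n2 ≤ s ^ 2 := (div_le_iff₀ hn2R).mpr hνr
  have hνr1 : ν * r / n1 ≤ s ^ 2 := (div_le_iff₀ hn1R).mpr (hνr.trans (by gcongr))
  have hfac : ∀ e, |flat (U * Vᵀ) e| ≤ s * (Real.sqrt n1)⁻¹ := by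
    intro e
    refine (hUV e.1 e.2).trans ?_
    rw [← Real.sqrt_sq hs0.le, ← Real.sqrt_inv, ← Real.sqrt_mul (sq_nonneg s)]
    refine Real.sqrt_le_sqrt ?_
    rw [mul_comm (n1 : ℝ), ← div_div, ← div_eq_mul_inv]
    gcongr
  have hN0 : (0 : ℝ) < n1 * n2 := by positivity
  have hρ : m / (n1 * n2 : ℝ) ≤ min (1 / 10 ^ 7)
      (2 * (1 / 53248) * Real.exp (-(1 / (2 * (1 / 53248) ^ 2)))) := by
    rw [div_le_iff₀ hN0, ← mul_assoc]
    exact hm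
  have hρ1 := hρ.trans (min_le_left _ _)
  have hmlt : m < n1 * n2 := by
    have : (m : ℝ) < n1 * n2 := by
      rw [← div_lt_one hN0]
      exact hρ1.trans_lt (by norm_num)
    exact_mod_cast this
  obtain ⟨ε, hε0, hε, hprob⟩ := bernoulli_failure_le hn2 hn hlarge hU hV hs
    (fun i => (hUr i).trans hνr1) (fun j => (hVr j).trans hνr2) hfac (by positivity) hρ1
    (hρ.trans (min_le_right _ _))
  have htransfer := unifProb_ge_bernoulli hmlt (HasCertificate U V ε)
  refine (sub_le_sub_left hprob 1).trans (htransfer.trans ?_)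
  unfold unifProb
  gcongr with ω
  exact sparseOf_recovery_of_hasCertificate hn2 hlarge hU hV hσ ha hε0 hε ω
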